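/- Let Δ be a Cohen-Macaulay simplicial forest on vertex set V(Δ) and let R = K[x_v : v ∈ V(Δ)] be a polynomial ring over a field K. Then for every k ≥ 1, the quotient R/I(Δ)^{[k]} is Cohen-Macaulay (where for k > ν(Δ) the ideal I(Δ)^{[k]} is the zero ideal, so R/I(Δ)^{[k]} = R). -/

import Mathlib

open MvPolynomial

/-- A simplicial complex on the vertex set `V`, presented by its set of facets
(the maximal faces).  Every facet is nonempty and no facet contains another. -/
structure SimplicialComplexOn (V : Type) [Fintype V] [DecidableEq V] : Type where
  facets : Finset (Finset V)
  nonempty_facet : ∀ F ∈ facets, F.Nonempty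
  antichain : ∀ F ∈ facets, ∀ G ∈ facets, F ⊆ G → F = G

variable {V : Type} [Fintype V] [DecidableEq V]

/-- `F` is a leaf of the collection of facets `S`: either `F` is the only facet, or
there is a facet `G ≠ F` (a joint) with `F ∩ H ⊆ F ∩ G` for every facet `H ≠ F`. -/
def IsLeafOf (S : Finset (Finset V)) (F : Finset V) : Prop :=
  F ∈ S ∧ ((∀ H ∈ S, H = F) ∨
    ∃ G ∈ S, G ≠ F ∧ ∀ H ∈ S, H ≠ F → F ∩ H ⊆ F ∩ G)

/-- The forest property for a facet collection: every nonempty subcollection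
(i.e. every nonempty subcomplex) has a leaf. -/
def HasLeafProp (S : Finset (Finset V)) : Prop :=
  ∀ T ⊆ S, T.Nonempty → ∃ F, IsLeafOf T F

/-- A good leaf: a facet which is a leaf of every subcomplex containing it. -/
def IsGoodLeafOf (S : Finset (Finset V)) (F : Finset V) : Prop :=
  F ∈ S ∧ ∀ T ⊆ S, F ∈ T → IsLeafOf T F

/-- A special leaf: a leaf `F` such that for all facets `H, H' ≠ F`,
`H ∩ H' ≠ ∅` iff `(H ∩ H') \ F ≠ ∅`. -/
def IsSpecialLeafOf (S : Finset (Finset V)) (F : Finset V) : Prop :=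
  IsLeafOf S F ∧ ∀ H ∈ S, ∀ H' ∈ S, H ≠ F → H' ≠ F →
    ((H ∩ H').Nonempty ↔ ((H ∩ H') \ F).Nonempty)

/-- A matching: a subcollection of the facets that is pairwise disjoint. -/
def IsMatchingOf (S : Finset (Finset V)) (M : Finset (Finset V)) : Prop :=
  M ⊆ S ∧ ∀ F ∈ M, ∀ G ∈ M, F ≠ G → F ∩ G = ∅

/-- The matching number: maximum size of a matching. -/
noncomputable def matchingNumberOf (S : Finset (Finset V)) : ℕ :=
  sSup {n | ∃ M : Finset (Finset V), IsMatchingOf S M ∧ M.card = n}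

/-- The facet collection `S` is grafted: it decomposes as `Fs ∪ Gs` where
(1) every vertex of a `G ∈ Gs` lies in some `F ∈ Fs`, (2) `Fs` is exactly the set
of leaves of `S`, (3) `Fs` and `Gs` are disjoint, (4) the members of `Fs` are
pairwise disjoint, and (5) for each `G ∈ Gs`, deleting the facet `G` leaves a
grafted collection. -/
inductive IsGrafted : Finset (Finset V) → Prop where
  | intro (S Fs Gs : Finset (Finset V))
      (hunion : S = Fs ∪ Gs)
      (hdisj : Disjoint Fs Gs)
      (hcover : ∀ G ∈ Gs, ∀ v ∈ G, ∃ F ∈ Fs, v ∈ F)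
      (hleaves : ∀ F, IsLeafOf S F ↔ F ∈ Fs)
      (hFdisj : ∀ F ∈ Fs, ∀ F' ∈ Fs, F ≠ F' → F ∩ F' = ∅)
      (hrec : ∀ G ∈ Gs, IsGrafted (S.erase G)) :
      IsGrafted S

/-- `S` is the (minimal presentation of the) grafting of the collection `Gs`
with the simplices `Fs`. -/
def IsGraftingDecomp (S Fs Gs : Finset (Finset V)) : Prop :=
  S = Fs ∪ Gs ∧ Disjoint Fs Gs ∧
  (∀ G ∈ Gs, ∀ v ∈ G, ∃ F ∈ Fs, v ∈ F) ∧
  (∀ F, IsLeafOf S F ↔ F ∈ Fs) ∧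
  (∀ F ∈ Fs, ∀ F' ∈ Fs, F ≠ F' → F ∩ F' = ∅) ∧
  (∀ G ∈ Gs, IsGrafted (S.erase G))

/-- A Cohen-Macaulay simplicial forest, combinatorially: a grafted simplicial forest. -/
def IsCMForestFacets (S : Finset (Finset V)) : Prop :=
  HasLeafProp S ∧ IsGrafted S

/-- The closed neighborhood `N[F] = {F} ∪ {G ∈ S : G ≠ F, G ∩ F ≠ ∅}`. -/
def closedNbhd (S : Finset (Finset V)) (F : Finset V) : Finset (Finset V) :=
  insert F (S.filter fun G => G ≠ F ∧ (G ∩ F).Nonempty)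

/-- The contraction of the facet collection `S` on `A`: the minimal members of
`{F \ A : F ∈ S}`. -/
def contraction (S : Finset (Finset V)) (A : Finset V) : Finset (Finset V) :=
  (S.image fun F => F \ A).filter fun F' => ∀ G ∈ S, G \ A ⊆ F' → G \ A = F'

variable (K : Type) [Field K]

/-- The square-free monomial `x_S = ∏_{v ∈ S} x_v`. -/
noncomputable def xMon (S : Finset V) : MvPolynomial V K := ∏ v ∈ S, X v

/-- The facet ideal `I(Δ) = ⟨x_F : F a facet⟩`. -/
noncomputable def facetIdealOf (S : Finset (Finset V)) : Ideal (MvPolynomial V K) :=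
  Ideal.span { p | ∃ F ∈ S, p = xMon K F }

/-- The `k`-th square-free power of an ideal: the ideal generated by all
square-free monomials lying in `I ^ k`. -/
noncomputable def sqfreePow (I : Ideal (MvPolynomial V K)) (k : ℕ) :
    Ideal (MvPolynomial V K) :=
  Ideal.span { p | (∃ S : Finset V, p = xMon K S) ∧ p ∈ I ^ k }

/-- The depth of `R/I` with respect to the homogeneous maximal ideal
`m = ⟨x_v : v ∈ V⟩`: the largest length of an `R/I`-regular sequence of
elements of `m`. -/
noncomputable def gradedDepth (I : Ideal (MvPolynomial V K)) : ℕ :=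
  sSup {n | ∃ rs : List (MvPolynomial V K), rs.length = n ∧
    (∀ r ∈ rs, r ∈ Ideal.span (Set.range (X : V → MvPolynomial V K))) ∧
    RingTheory.Sequence.IsRegular (MvPolynomial V K ⧸ I) rs}

/-- `R/I` is Cohen-Macaulay: its depth equals its Krull dimension. -/
def IsCMQuot (I : Ideal (MvPolynomial V K)) : Prop :=
  ((gradedDepth K I : ℕ∞) : WithBot ℕ∞) = ringKrullDim (MvPolynomial V K ⧸ I)

section Algebra

set_option linter.unusedSectionVars false

open RingTheory.Sequence
open scoped Pointwise

/-- Weakly regular sequences are closed under extensions. -/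
theorem wr_ext {R : Type} [CommRing R] (rs : List R) :
    ∀ {M₁ M₂ M₃ : Type} [AddCommGroup M₁] [AddCommGroup M₂] [AddCommGroup M₃]
      [Module R M₁] [Module R M₂] [Module R M₃] (f : M₁ →ₗ[R] M₂) (g : M₂ →ₗ[R] M₃),
      Function.Injective f → Function.Exact f g → Function.Surjective g →
      IsWeaklyRegular M₁ rs → IsWeaklyRegular M₃ rs → IsWeaklyRegular M₂ rs := by
  induction rs with
  | nil => intros; simp
  | cons r rs ih =>
    intro M₁ M₂ M₃ _ _ _ _ _ _ f g hf hfg hg h1 h3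
    rw [isWeaklyRegular_cons_iff] at h1 h3 ⊢
    refine ⟨isSMulRegular_of_range_eq_ker hf (LinearMap.exact_iff.mp hfg).symm h1.1 h3.1, ?_⟩
    refine ih (QuotSMulTop.map r f) (QuotSMulTop.map r g) ?_ (QuotSMulTop.map_exact r hfg hg)
      (QuotSMulTop.map_surjective r hg) h1.2 h3.2
    rw [injective_iff_map_eq_zero]
    intro a ha
    obtain ⟨a, rfl⟩ := Submodule.Quotient.mk_surjective _ a
    rw [QuotSMulTop.map_apply_mk, Submodule.Quotient.mk_eq_zero,
      Submodule.mem_smul_pointwise_iff_exists] at ha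
    obtain ⟨b, -, hb⟩ := ha
    have hgb : g b = 0 := by
      have h0 : r • g b = 0 := by
        rw [← map_smul, hb]
        exact hfg.apply_apply_eq_zero a
      exact (isSMulRegular_iff_right_eq_zero_of_smul.mp h3.1) _ h0
    obtain ⟨c, rfl⟩ := (hfg b).mp hgb
    rw [Submodule.Quotient.mk_eq_zero, Submodule.mem_smul_pointwise_iff_exists]
    refine ⟨c, trivial, hf ?_⟩
    rw [map_smul, hb]

/-- The two-term lemma: colon and sum. -/
theorem wr_two {R : Type} [CommRing R] (rs : List R) (I J L : Ideal R) (x : R)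
    (hJ : ∀ p, p ∈ J ↔ x * p ∈ I) (hL : L = I ⊔ Ideal.span {x})
    (h1 : IsWeaklyRegular (R ⧸ J) rs) (h3 : IsWeaklyRegular (R ⧸ L) rs) :
    IsWeaklyRegular (R ⧸ I) rs := by
  have hIL : I ≤ L := hL ▸ le_sup_left
  have hle : J ≤ Submodule.comap (LinearMap.mulLeft R x) I := fun p hp => (hJ p).mp hp
  refine wr_ext rs (Submodule.mapQ J I (LinearMap.mulLeft R x) hle)
    (Submodule.factor hIL) ?_ ?_ ?_ h1 h3
  · rw [injective_iff_map_eq_zero]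
    intro a ha
    obtain ⟨a, rfl⟩ := Submodule.Quotient.mk_surjective _ a
    rw [Submodule.mapQ_apply, Submodule.Quotient.mk_eq_zero] at ha
    rw [Submodule.Quotient.mk_eq_zero]
    exact (hJ a).mpr ha
  · intro b
    obtain ⟨b, rfl⟩ := Submodule.Quotient.mk_surjective _ b
    have : Submodule.factor hIL (Submodule.Quotient.mk b) = Submodule.Quotient.mk b := rfl
    rw [this, Submodule.Quotient.mk_eq_zero, hL]
    constructor
    · intro h
      obtain ⟨i, hi, y, hy, rfl⟩ := Submodule.mem_sup.mp h
      obtain ⟨c, rfl⟩ := Ideal.mem_span_singleton'.mp hy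
      refine ⟨Submodule.Quotient.mk c, ?_⟩
      rw [Submodule.mapQ_apply, Submodule.Quotient.eq]
      have : (LinearMap.mulLeft R x) c - (i + c * x) = - i := by simp; ring
      rw [this]
      exact neg_mem hi
    · rintro ⟨c, hc⟩
      obtain ⟨c, rfl⟩ := Submodule.Quotient.mk_surjective _ c
      rw [Submodule.mapQ_apply, Submodule.Quotient.eq] at hc
      have h2 : b = -((LinearMap.mulLeft R x) c - b) + c * x := by simp; ring
      rw [h2]
      exact Submodule.add_mem_sup (neg_mem hc) (Ideal.mem_span_singleton'.mpr ⟨c, rfl⟩)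
  · exact Submodule.factor_surjective hIL

/-- exponent vector of a square-free monomial -/
noncomputable def indE (A : Finset V) : V →₀ ℕ := ∑ v ∈ A, Finsupp.single v 1

theorem indE_apply (A : Finset V) (w : V) : indE A w = if w ∈ A then 1 else 0 := by
  simp [indE, Finsupp.finsetSum_apply, Finsupp.single_apply]

theorem indE_support (A : Finset V) : (indE A).support = A := by
  ext v; simp [indE_apply]

theorem xMon_eq (A : Finset V) : xMon K A = monomial (indE A) 1 := by
  simp [xMon, indE, monomial_sum_one, X]

theorem indE_le (A : Finset V) (m : V →₀ ℕ) : indE A ≤ m ↔ A ⊆ m.support := by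
  constructor
  · intro h v hv
    have := h v
    rw [indE_apply, if_pos hv] at this
    simp; omega
  · intro h v
    rw [indE_apply]
    split_ifs with hv
    · have := h hv
      simp at this; omega
    · omega

/-- the square-free monomial ideal attached to a family of non-faces -/
noncomputable def sqI (U : Finset V → Prop) : Ideal (MvPolynomial V K) :=
  Ideal.span {p | ∃ A, U A ∧ p = xMon K A}

def UpC (U : Finset V → Prop) : Prop := ∀ A B, A ⊆ B → U A → U B

theorem mem_sqI {U : Finset V → Prop} (hU : UpC U) (p : MvPolynomial V K) :
    p ∈ sqI K U ↔ ∀ m ∈ p.support, U m.support := by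
  have : {p | ∃ A, U A ∧ p = xMon K A} =
      (fun s => monomial s (1 : K)) '' {e | ∃ A, U A ∧ e = indE A} := by
    ext p
    constructor
    · rintro ⟨A, hA, rfl⟩
      exact ⟨indE A, ⟨A, hA, rfl⟩, (xMon_eq K A).symm⟩
    · rintro ⟨_, ⟨A, hA, rfl⟩, rfl⟩
      exact ⟨A, hA, (xMon_eq K A).symm⟩
  rw [sqI, this, mem_ideal_span_monomial_image]
  refine forall₂_congr fun m _ => ?_
  constructor
  · rintro ⟨_, ⟨A, hA, rfl⟩, h⟩
    exact hU A _ ((indE_le A m).mp h) hA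
  · intro h
    exact ⟨indE m.support, ⟨_, h, rfl⟩, (indE_le _ m).mpr subset_rfl⟩

theorem xMon_mem_sqI {U : Finset V → Prop} {A : Finset V} (h : U A) : xMon K A ∈ sqI K U :=
  Ideal.subset_span ⟨A, h, rfl⟩

theorem mul_mem_sqI {U : Finset V → Prop} (hU : UpC U) (A : Finset V) (p : MvPolynomial V K) :
    xMon K A * p ∈ sqI K U ↔ ∀ m ∈ p.support, U (A ∪ m.support) := by
  rw [mem_sqI K hU, xMon_eq]
  constructor
  · intro h m hm
    have h1 : indE A + m ∈ (monomial (indE A) (1 : K) * p).support := by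
      rw [mem_support_iff, coeff_monomial_mul, one_mul]
      exact mem_support_iff.mp hm
    have h2 := h _ h1
    refine hU _ _ ?_ h2
    refine Finsupp.support_add.trans ?_
    rw [indE_support]
  · intro h m hm
    rw [mem_support_iff, coeff_monomial_mul'] at hm
    split_ifs at hm with hle
    · rw [one_mul] at hm
      refine hU _ _ ?_ (h _ (mem_support_iff.mpr hm))
      refine Finset.union_subset ((indE_le A m).mp hle) ?_
      intro v hv
      simp only [Finsupp.mem_support_iff, Finsupp.tsub_apply] at hv ⊢
      omega
    · exact absurd rfl hm

theorem xMon_singleton (v : V) : xMon K {v} = X v := by simp [xMon]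

theorem sqI_mono {U U' : Finset V → Prop} (h : ∀ A, U A → U' A) : sqI K U ≤ sqI K U' :=
  Ideal.span_mono (by rintro p ⟨A, hA, rfl⟩; exact ⟨A, h A hA, rfl⟩)

theorem sqI_congr {U U' : Finset V → Prop} (h : ∀ A, U A ↔ U' A) : sqI K U = sqI K U' :=
  le_antisymm (sqI_mono K fun A => (h A).mp) (sqI_mono K fun A => (h A).mpr)

theorem sqI_sup {U : Finset V → Prop} (_hU : UpC U) (C : Finset V) :
    sqI K (fun A => C ⊆ A ∨ U A) = sqI K U ⊔ Ideal.span {xMon K C} := by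
  apply le_antisymm
  · rw [sqI, Ideal.span_le]
    rintro p ⟨A, hA | hA, rfl⟩
    · apply Ideal.mem_sup_right
      rw [Ideal.mem_span_singleton]
      exact Finset.prod_dvd_prod_of_subset _ _ _ hA
    · exact Ideal.mem_sup_left (xMon_mem_sqI K hA)
  · refine sup_le (sqI_mono K fun A h => Or.inr h) ?_
    rw [Ideal.span_singleton_le_iff_mem]
    exact xMon_mem_sqI K (Or.inl subset_rfl)

theorem wr_subsingleton {R : Type} [CommRing R] (rs : List R) :
    ∀ {M : Type} [AddCommGroup M] [Module R M] [Subsingleton M], IsWeaklyRegular M rs := by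
  induction rs with
  | nil => intros; simp
  | cons r rs ih =>
    intro M _ _ _
    rw [isWeaklyRegular_cons_iff]
    have : Subsingleton (QuotSMulTop r M) :=
      (Submodule.Quotient.mk_surjective (r • (⊤ : Submodule R M))).subsingleton
    exact ⟨fun a b _ => Subsingleton.elim a b, ih⟩

/-- two-term lemma, combinatorial version -/
theorem wr_step {U U1 U2 : Finset V → Prop} (hU : UpC U) (v : V) (rs : List (MvPolynomial V K))
    (e1 : ∀ A, U1 A ↔ U (insert v A)) (e2 : ∀ A, U2 A ↔ (v ∈ A ∨ U A))
    (h1 : IsWeaklyRegular (MvPolynomial V K ⧸ sqI K U1) rs)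
    (h2 : IsWeaklyRegular (MvPolynomial V K ⧸ sqI K U2) rs) :
    IsWeaklyRegular (MvPolynomial V K ⧸ sqI K U) rs := by
  refine wr_two rs (sqI K U) (sqI K U1) (sqI K U2) (xMon K {v}) ?_ ?_ h1 h2
  · intro p
    have hU1 : UpC U1 := by
      intro A B hAB h
      rw [e1] at h ⊢
      exact hU _ _ (Finset.insert_subset_insert v hAB) h
    rw [mul_mem_sqI K hU, mem_sqI K hU1]
    refine forall₂_congr fun m _ => ?_
    rw [e1, Finset.insert_eq]
  · rw [← sqI_sup K hU]
    refine sqI_congr K fun A => ?_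
    rw [e2, Finset.singleton_subset_iff]

theorem sqI_top {U : Finset V → Prop} (h : ∀ A, U A) : sqI K U = ⊤ := by
  rw [Ideal.eq_top_iff_one]
  have := xMon_mem_sqI K (h ∅)
  simpa [xMon] using this

theorem wr_top {U : Finset V → Prop} (h : ∀ A, U A) (rs : List (MvPolynomial V K)) :
    IsWeaklyRegular (MvPolynomial V K ⧸ sqI K U) rs := by
  have : Subsingleton (MvPolynomial V K ⧸ sqI K U) :=
    Ideal.Quotient.subsingleton_iff.mpr (sqI_top K h)
  exact wr_subsingleton rs

/-- The sequence `e_d, …, e_1` of elementary symmetric polynomials. -/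
noncomputable def Theta (V : Type) [Fintype V] (K : Type) [Field K] : ℕ → List (MvPolynomial V K)
  | 0 => []
  | d + 1 => esymm V K (d + 1) :: Theta V K d

theorem upc_prime (W : Finset V) : UpC (fun A => ¬ A ⊆ W) :=
  fun _ _ hAB h h' => h (hAB.trans h')

theorem wr_boundary (d : ℕ)
    (ih : ∀ W : Finset V, W.card = d →
      IsWeaklyRegular (MvPolynomial V K ⧸ sqI K (fun A => ¬ A ⊆ W)) (Theta V K d))
    (W : Finset V) (hW : W.card = d + 1) (C : Finset V) : C ⊆ W →
    IsWeaklyRegular (MvPolynomial V K ⧸ sqI K (fun A => C ⊆ A ∨ ¬ A ⊆ W)) (Theta V K d) := by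
  induction C using Finset.induction_on with
  | empty =>
    intro _
    exact wr_top K (by simp) _
  | insert v C hv ihC =>
    intro hCW
    have hvW : v ∈ W := hCW (Finset.mem_insert_self v C)
    have hC' : C ⊆ W := (Finset.subset_insert v C).trans hCW
    refine wr_step K (U1 := fun A => C ⊆ A ∨ ¬ A ⊆ W) (U2 := fun A => ¬ A ⊆ W.erase v)
      ?_ v _ ?_ ?_ (ihC hC') (ih _ ?_)
    · rintro A B hAB (h | h)
      · exact Or.inl (h.trans hAB)
      · exact Or.inr fun h' => h (hAB.trans h')
    · intro A
      have h1 : insert v C ⊆ insert v A ↔ C ⊆ A := Finset.insert_subset_insert_iff hv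
      have h2 : insert v A ⊆ W ↔ A ⊆ W := by simp [Finset.insert_subset_iff, hvW]
      rw [h1, h2]
    · intro A
      rw [Finset.subset_erase, Finset.insert_subset_iff]
      tauto
    · rw [Finset.card_erase_of_mem hvW, hW]; rfl

theorem esymm_sub_mem (W : Finset V) (d : ℕ) (hW : W.card = d) :
    esymm V K d - xMon K W ∈ sqI K (fun A => ¬ A ⊆ W) := by
  have hmem : W ∈ Finset.powersetCard d (Finset.univ : Finset V) := by simp [hW]
  rw [esymm, ← Finset.add_sum_erase _ _ hmem]
  have : (∏ i ∈ W, X i : MvPolynomial V K) = xMon K W := rfl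
  rw [this, add_sub_cancel_left]
  refine Ideal.sum_mem _ fun t ht => ?_
  refine xMon_mem_sqI K (U := fun A => ¬ A ⊆ W) ?_
  intro h
  rw [Finset.mem_erase, Finset.mem_powersetCard] at ht
  exact ht.1 (Finset.eq_of_subset_of_card_le h (by omega))

theorem wr_quot {R : Type} [CommRing R] (I : Ideal R) (r : R) (rs : List R)
    (h : IsWeaklyRegular (R ⧸ (I ⊔ Ideal.span {r})) rs) :
    IsWeaklyRegular (QuotSMulTop r (R ⧸ I)) rs := by
  have e1 : (r • ⊤ : Submodule R (R ⧸ I)) = Submodule.map I.mkQ (Ideal.span {r}) := by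
    rw [← Submodule.range_mkQ I, LinearMap.range_eq_map, ← Submodule.map_pointwise_smul]
    congr 1
    ext y
    rw [Submodule.mem_smul_pointwise_iff_exists, Ideal.mem_span_singleton']
    constructor
    · rintro ⟨b, -, rfl⟩; exact ⟨b, by simp [mul_comm]⟩
    · rintro ⟨b, rfl⟩; exact ⟨b, trivial, by simp [mul_comm]⟩
  have e := (Submodule.quotEquivOfEq _ _ e1).trans
    (Submodule.quotientQuotientEquivQuotientSup I (Ideal.span {r}))
  exact (e.isWeaklyRegular_congr rs).mpr h

theorem wr_prime (d : ℕ) : ∀ W : Finset V, W.card = d →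
    IsWeaklyRegular (MvPolynomial V K ⧸ sqI K (fun A => ¬ A ⊆ W)) (Theta V K d) := by
  induction d with
  | zero => intro W _; simp [Theta]
  | succ d ih =>
    intro W hW
    rw [Theta, isWeaklyRegular_cons_iff]
    have hsub := esymm_sub_mem K W (d + 1) hW
    constructor
    · rw [isSMulRegular_quotient_iff_mem_of_smul_mem]
      intro p hp
      have h2 : xMon K W * p ∈ sqI K (fun A => ¬ A ⊆ W) := by
        have : xMon K W * p = esymm V K (d + 1) * p - (esymm V K (d + 1) - xMon K W) * p := by
          ring
        rw [this]
        exact sub_mem hp (Ideal.mul_mem_right _ _ hsub)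
      rw [mul_mem_sqI K (upc_prime W)] at h2
      rw [mem_sqI K (upc_prime W)]
      intro m hm h'
      exact h2 m hm (Finset.union_subset subset_rfl h')
    · apply wr_quot
      have : sqI K (fun A => ¬ A ⊆ W) ⊔ Ideal.span {esymm V K (d + 1)} =
          sqI K (fun A => W ⊆ A ∨ ¬ A ⊆ W) := by
        rw [sqI_sup K (upc_prime W)]
        apply le_antisymm
        · refine sup_le le_sup_left ?_
          rw [Ideal.span_singleton_le_iff_mem]
          have : esymm V K (d + 1) = (esymm V K (d + 1) - xMon K W) + xMon K W := by ring
          rw [this]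
          exact Submodule.add_mem_sup hsub (Ideal.mem_span_singleton_self _)
        · refine sup_le le_sup_left ?_
          rw [Ideal.span_singleton_le_iff_mem]
          have : xMon K W = -(esymm V K (d + 1) - xMon K W) + esymm V K (d + 1) := by ring
          rw [this]
          exact Submodule.add_mem_sup (neg_mem hsub) (Ideal.mem_span_singleton_self _)
      rw [this]
      exact wr_boundary K d ih W hW W subset_rfl

/-- pure vertex decomposability of a family of non-faces -/
inductive VD : ℕ → (Finset V → Prop) → Prop where
  | top (d : ℕ) (U : Finset V → Prop) (h : ∀ A, U A) : VD d U
  | base (d : ℕ) (U : Finset V → Prop) (W : Finset V) (hW : W.card = d)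
      (h : ∀ A, U A ↔ ¬ A ⊆ W) : VD d U
  | step (d : ℕ) (U : Finset V → Prop) (v : V) (h1 : VD d (fun A => U (insert v A)))
      (h2 : VD d (fun A => v ∈ A ∨ U A)) : VD d U

theorem upc_ins {U : Finset V → Prop} (hU : UpC U) (v : V) : UpC (fun A => U (insert v A)) :=
  fun _ _ hAB h => hU _ _ (Finset.insert_subset_insert v hAB) h

theorem upc_or {U : Finset V → Prop} (hU : UpC U) (v : V) : UpC (fun A => v ∈ A ∨ U A) :=
  fun A B hAB h => h.elim (fun h => Or.inl (hAB h)) (fun h => Or.inr (hU A B hAB h))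

theorem wr_of_VD {d : ℕ} {U : Finset V → Prop} (h : VD d U) : UpC U →
    IsWeaklyRegular (MvPolynomial V K ⧸ sqI K U) (Theta V K d) := by
  induction h with
  | top U h => intro _; exact wr_top K h _
  | base U W hW h => intro _; rw [sqI_congr K h]; exact wr_prime K d W hW
  | step U v h1 h2 ih1 ih2 =>
    intro hU
    exact wr_step K hU v _ (fun _ => Iff.rfl) (fun _ => Iff.rfl)
      (ih1 (upc_ins hU v)) (ih2 (upc_or hU v))

theorem prime_of_VD {d : ℕ} {U : Finset V → Prop} (h : VD d U) : UpC U →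
    ∀ Q : Ideal (MvPolynomial V K), Q.IsPrime → sqI K U ≤ Q →
      ∃ W : Finset V, W.card = d ∧ sqI K (fun A => ¬ A ⊆ W) ≤ Q := by
  induction h with
  | top U h =>
    intro _ Q hQ hle
    rw [sqI_top K h, top_le_iff] at hle
    exact absurd hle hQ.ne_top
  | base U W hW h =>
    intro _ Q hQ hle
    exact ⟨W, hW, by rwa [← sqI_congr K h]⟩
  | step U v h1 h2 ih1 ih2 =>
    intro hU Q hQ hle
    by_cases hv : xMon K {v} ∈ Q
    · refine ih2 (upc_or hU v) Q hQ ?_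
      have : sqI K (fun A => v ∈ A ∨ U A) = sqI K U ⊔ Ideal.span {xMon K {v}} := by
        rw [← sqI_sup K hU]
        exact sqI_congr K fun A => by rw [Finset.singleton_subset_iff]
      rw [this]
      exact sup_le hle ((Ideal.span_singleton_le_iff_mem _).mpr hv)
    · refine ih1 (upc_ins hU v) Q hQ ?_
      intro p hp
      have h3 : xMon K {v} * p ∈ sqI K U := by
        rw [mul_mem_sqI K hU]
        intro m hm
        rw [← Finset.insert_eq]
        exact (mem_sqI K (upc_ins hU v) p).mp hp m hm
      exact (hQ.mem_or_mem (hle h3)).resolve_left hv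

theorem dim_prime (W : Finset V) :
    ringKrullDim (MvPolynomial V K ⧸ sqI K (fun A => ¬ A ⊆ W)) ≤ (W.card : ℕ∞) := by
  let I := sqI K (fun A : Finset V => ¬ A ⊆ W)
  let f : MvPolynomial W K →ₐ[K] (MvPolynomial V K ⧸ I) :=
    (Ideal.Quotient.mkₐ K I).comp (rename (Subtype.val : W → V))
  have hf : Function.Surjective f := by
    intro y
    obtain ⟨p, rfl⟩ := Ideal.Quotient.mk_surjective y
    change Ideal.Quotient.mk I p ∈ f.range
    induction p using MvPolynomial.induction_on with
    | C a => exact f.range.algebraMap_mem a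
    | add p q hp hq => rw [map_add]; exact f.range.add_mem hp hq
    | mul_X p v hp =>
      rw [map_mul]
      refine f.range.mul_mem hp ?_
      by_cases hv : v ∈ W
      · exact ⟨X ⟨v, hv⟩, by simp [f]⟩
      · have : (Ideal.Quotient.mk I) (X v) = 0 := by
          rw [Ideal.Quotient.eq_zero_iff_mem, ← xMon_singleton]
          exact xMon_mem_sqI K (by simpa using hv)
        rw [this]
        exact f.range.zero_mem
  refine (ringKrullDim_le_of_surjective f.toRingHom hf).trans ?_
  rw [MvPolynomial.ringKrullDim_of_isNoetherianRing, ringKrullDim_eq_zero_of_field]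
  simp

theorem dim_le_of_VD {d : ℕ} {U : Finset V → Prop} (h : VD d U) (hU : UpC U) :
    ringKrullDim (MvPolynomial V K ⧸ sqI K U) ≤ (d : ℕ∞) := by
  rw [ringKrullDim_quotient, Order.krullDim]
  refine iSup_le fun l => ?_
  obtain ⟨W, hW, hle⟩ := prime_of_VD K h hU l.head.1.asIdeal l.head.1.isPrime l.head.2
  have hall : ∀ i, (l i).1 ∈ PrimeSpectrum.zeroLocus
      ((sqI K (fun A : Finset V => ¬ A ⊆ W) : Ideal (MvPolynomial V K)) :
        Set (MvPolynomial V K)) := by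
    intro i
    have h0 : l.head ≤ l i := LTSeries.head_le l i
    exact hle.trans h0
  have hd := dim_prime K W
  rw [ringKrullDim_quotient, hW] at hd
  let l' : LTSeries (PrimeSpectrum.zeroLocus
      ((sqI K (fun A : Finset V => ¬ A ⊆ W) : Ideal (MvPolynomial V K)) :
        Set (MvPolynomial V K))) :=
    { length := l.length
      toFun := fun i => ⟨(l i).1, hall i⟩
      step := fun i => l.step i }
  exact le_trans (Order.LTSeries.length_le_krullDim l') hd

theorem reg_length_le {R : Type} [CommRing R] (rs : List R) :
    ∀ {M : Type} [AddCommGroup M] [Module R M] [Module.Finite R M],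
      IsRegular M rs → ((rs.length : ℕ∞) : WithBot ℕ∞) ≤ Module.supportDim R M := by
  induction rs with
  | nil =>
    intro M _ _ _ h
    have := h.nontrivial
    have h1 := Module.supportDim_ne_bot_of_nontrivial R M
    have : Nonempty (Module.support R M) := Module.nonempty_support_of_nontrivial.to_subtype
    have h2 : 0 ≤ Module.supportDim R M := Order.krullDim_nonneg (α := Module.support R M)
    simpa using h2
  | cons r rs ih =>
    intro M _ _ _ h
    rw [isRegular_cons_iff] at h
    have h1 := ih h.2
    refine le_trans ?_ (Module.supportDim_quotSMulTop_succ_le_of_notMem_minimalPrimes (x := r) ?_)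
    · simp only [List.length_cons]
      push_cast
      exact add_le_add_left h1 1
    · exact fun _ => h.1.notMem_of_mem_minimalPrimes

theorem span_X_ne_top :
    Ideal.span (Set.range (X : V → MvPolynomial V K)) ≠ ⊤ := by
  intro h
  have hle : Ideal.span (Set.range (X : V → MvPolynomial V K)) ≤
      RingHom.ker (constantCoeff : MvPolynomial V K →+* K) := by
    rw [Ideal.span_le]
    rintro _ ⟨v, rfl⟩
    simp
  rw [h, top_le_iff] at hle
  exact RingHom.ker_ne_top _ hle

theorem xMon_mem_max {A : Finset V} (hA : A.Nonempty) :
    xMon K A ∈ Ideal.span (Set.range (X : V → MvPolynomial V K)) := by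
  obtain ⟨v, hv⟩ := hA
  exact Ideal.mem_of_dvd _ (Finset.dvd_prod_of_mem _ hv) (Ideal.subset_span ⟨v, rfl⟩)

theorem Theta_mem (d : ℕ) : ∀ r ∈ Theta V K d,
    r ∈ Ideal.span (Set.range (X : V → MvPolynomial V K)) := by
  induction d with
  | zero => simp [Theta]
  | succ d ih =>
    intro r hr
    rw [Theta, List.mem_cons] at hr
    rcases hr with rfl | hr
    · rw [esymm]
      refine Ideal.sum_mem _ fun t ht => xMon_mem_max K ?_
      rw [Finset.mem_powersetCard] at ht
      rw [← Finset.card_pos]; omega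
    · exact ih r hr

theorem Theta_length (d : ℕ) : (Theta V K d).length = d := by
  induction d with
  | zero => rfl
  | succ d ih => simp [Theta, ih]

theorem sqI_le_max {U : Finset V → Prop} (h0 : ¬ U ∅) :
    sqI K U ≤ Ideal.span (Set.range (X : V → MvPolynomial V K)) := by
  rw [sqI, Ideal.span_le]
  rintro p ⟨A, hA, rfl⟩
  refine xMon_mem_max K ?_
  rw [Finset.nonempty_iff_ne_empty]
  rintro rfl
  exact h0 hA

theorem cm_of_VD {d : ℕ} {U : Finset V → Prop} (h : VD d U) (hU : UpC U) (h0 : ¬ U ∅) :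
    IsCMQuot K (sqI K U) := by
  have hreg : IsRegular (MvPolynomial V K ⧸ sqI K U) (Theta V K d) := by
    refine ⟨wr_of_VD K h hU, fun htop => ?_⟩
    have hle : Ideal.ofList (Theta V K d) • (⊤ : Submodule _ (MvPolynomial V K ⧸ sqI K U)) ≤
        Submodule.map (sqI K U).mkQ (Ideal.span (Set.range (X : V → MvPolynomial V K))) := by
      rw [Submodule.smul_le]
      intro r hr n _
      obtain ⟨p, rfl⟩ := Submodule.Quotient.mk_surjective _ n
      refine ⟨r * p, Ideal.mul_mem_right _ _ ?_, rfl⟩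
      have : Ideal.ofList (Theta V K d) ≤
          Ideal.span (Set.range (X : V → MvPolynomial V K)) :=
        Ideal.span_le.mpr (Theta_mem K d)
      exact this hr
    rw [← htop] at hle
    obtain ⟨x, hx, hx1⟩ := hle (show (Submodule.Quotient.mk (1 : MvPolynomial V K) : MvPolynomial V K ⧸ sqI K U) ∈
      (⊤ : Submodule (MvPolynomial V K) (MvPolynomial V K ⧸ sqI K U)) from trivial)
    apply span_X_ne_top K (V := V)
    rw [Ideal.eq_top_iff_one]
    have h2 : x - 1 ∈ sqI K U := (Submodule.Quotient.eq _).mp hx1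
    have h3 := sub_mem hx (sqI_le_max K h0 h2)
    simpa using h3
  have hdim := dim_le_of_VD K h hU
  have hge : ∀ rs : List (MvPolynomial V K), IsRegular (MvPolynomial V K ⧸ sqI K U) rs →
      ((rs.length : ℕ∞) : WithBot ℕ∞) ≤ ringKrullDim (MvPolynomial V K ⧸ sqI K U) := by
    intro rs hrs
    rw [← Module.supportDim_quotient_eq_ringKrullDim]
    exact reg_length_le rs hrs
  have hd := hge _ hreg
  rw [Theta_length] at hd
  have hdep : gradedDepth K (sqI K U) = d := by
    refine IsGreatest.csSup_eq ⟨⟨Theta V K d, Theta_length K d, Theta_mem K d, hreg⟩, ?_⟩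
    rintro n ⟨rs, rfl, -, hrs⟩
    have := (hge rs hrs).trans hdim
    exact_mod_cast this
  rw [IsCMQuot, hdep]
  exact le_antisymm hd hdim

end Algebra

section Comb

set_option linter.unusedSectionVars false

theorem leafProp_mono {S T : Finset (Finset V)} (h : HasLeafProp S) (hT : T ⊆ S) :
    HasLeafProp T := fun U hU hne => h U (hU.trans hT) hne

theorem leaf_joint {T : Finset (Finset V)} {x z : Finset V} (h : IsLeafOf T x) (hz : z ∈ T)
    (hzx : z ≠ x) : ∃ y ∈ T, y ≠ x ∧ ∀ H ∈ T, H ≠ x → ∀ w ∈ x, w ∈ H → w ∈ y := by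
  rcases h.2 with h | ⟨y, hy, hyx, h⟩
  · exact absurd (h z hz) hzx
  · refine ⟨y, hy, hyx, fun H hH hHx w hw hwH => ?_⟩
    exact (Finset.mem_inter.mp (h H hH hHx (Finset.mem_inter.mpr ⟨hw, hwH⟩))).2

theorem no_leaf_three {T : Finset (Finset V)} (hl : HasLeafProp T) {a b c : Finset V}
    (ha : a ∈ T) (hb : b ∈ T) (hc : c ∈ T) {x y z : V}
    (hxb : x ∈ b) (hxc : x ∈ c) (hxa : x ∉ a)
    (hya : y ∈ a) (hyc : y ∈ c) (hyb : y ∉ b)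
    (hza : z ∈ a) (hzb : z ∈ b) (hzc : z ∉ c) : False := by
  have hab : a ≠ b := by rintro rfl; exact hxa hxb
  have hac : a ≠ c := by rintro rfl; exact hxa hxc
  have hbc : b ≠ c := by rintro rfl; exact hyb hyc
  obtain ⟨F, hF⟩ := hl {a, b, c} (by intro t; simp; rintro (rfl | rfl | rfl) <;> assumption)
    ⟨a, by simp⟩
  have hFm := hF.1
  simp only [Finset.mem_insert, Finset.mem_singleton] at hFm
  rcases hFm with rfl | rfl | rfl
  · obtain ⟨G, hG, hne, h⟩ := leaf_joint (z := b) hF (by simp) hab.symm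
    have h1 := h b (by simp) hab.symm z hza hzb
    have h2 := h c (by simp) hac.symm y hya hyc
    simp only [Finset.mem_insert, Finset.mem_singleton] at hG
    rcases hG with rfl | rfl | rfl <;> contradiction
  · obtain ⟨G, hG, hne, h⟩ := leaf_joint (z := a) hF (by simp) hab
    have h1 := h a (by simp) hab z hzb hza
    have h2 := h c (by simp) hbc.symm x hxb hxc
    simp only [Finset.mem_insert, Finset.mem_singleton] at hG
    rcases hG with rfl | rfl | rfl <;> contradiction
  · obtain ⟨G, hG, hne, h⟩ := leaf_joint (z := a) hF (by simp) hac
    have h1 := h a (by simp) hac y hyc hya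
    have h2 := h b (by simp) hbc x hxc hxb
    simp only [Finset.mem_insert, Finset.mem_singleton] at hG
    rcases hG with rfl | rfl | rfl <;> contradiction

theorem helly (n : ℕ) : ∀ T : Finset (Finset V), T.card = n → HasLeafProp T → T.Nonempty →
    (∀ E ∈ T, ∀ F ∈ T, (E ∩ F).Nonempty) → ∃ v, ∀ E ∈ T, v ∈ E := by
  induction n with
  | zero => intro T hT _ hne; exact absurd (Finset.card_pos.mpr hne) (by omega)
  | succ n ih =>
    intro T hT hl hne hp
    by_cases h3 : 2 < T.card
    · obtain ⟨a, ha, b, hb, c, hc, hab, hac, hbc⟩ := Finset.two_lt_card.mp h3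
      have key : ∀ e ∈ T, ∃ v, ∀ E ∈ T, E ≠ e → v ∈ E := by
        intro e he
        have hcard : (T.erase e).card = n := by rw [Finset.card_erase_of_mem he]; omega
        obtain ⟨v, hv⟩ := ih (T.erase e) hcard (leafProp_mono hl (Finset.erase_subset _ _))
          (Finset.card_pos.mp (by omega))
          (fun E hE F hF => hp E (Finset.mem_of_mem_erase hE) F (Finset.mem_of_mem_erase hF))
        exact ⟨v, fun E hE hne => hv E (Finset.mem_erase.mpr ⟨hne, hE⟩)⟩
      obtain ⟨x, hx⟩ := key a ha
      obtain ⟨y, hy⟩ := key b hb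
      obtain ⟨z, hz⟩ := key c hc
      by_cases hxa : x ∈ a
      · exact ⟨x, fun E hE => by
          by_cases h : E = a
          · rw [h]; exact hxa
          · exact hx E hE h⟩
      by_cases hyb : y ∈ b
      · exact ⟨y, fun E hE => by
          by_cases h : E = b
          · rw [h]; exact hyb
          · exact hy E hE h⟩
      by_cases hzc : z ∈ c
      · exact ⟨z, fun E hE => by
          by_cases h : E = c
          · rw [h]; exact hzc
          · exact hz E hE h⟩
      exact (no_leaf_three hl ha hb hc (hx b hb hab.symm) (hx c hc hac.symm) hxa
        (hy a ha hab) (hy c hc hbc.symm) hyb (hz a ha hac) (hz b hb hbc) hzc).elim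
    · obtain ⟨a, ha⟩ := hne
      by_cases h1 : ∃ b ∈ T, b ≠ a
      · obtain ⟨b, hb, hba⟩ := h1
        obtain ⟨v, hv⟩ := hp a ha b hb
        rw [Finset.mem_inter] at hv
        refine ⟨v, fun E hE => ?_⟩
        by_cases hEa : E = a
        · rw [hEa]; exact hv.1
        by_cases hEb : E = b
        · rw [hEb]; exact hv.2
        exact (h3 (Finset.two_lt_card.mpr ⟨a, ha, b, hb, E, hE, hba.symm, Ne.symm hEa,
          Ne.symm hEb⟩)).elim
      · push Not at h1
        obtain ⟨v, hv⟩ := hp a ha a ha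
        rw [Finset.inter_self] at hv
        exact ⟨v, fun E hE => by rw [h1 E hE]; exact hv⟩

/-- Separator lemma: two disjoint facets both meeting `u` cannot be joined
through facets missing `u`. -/
theorem sep_inter {E : Finset (Finset V)} (hl : HasLeafProp E) {u s t : Finset V}
    (hu : u ∈ E) (hs : s ∈ E) (ht : t ∈ E) (hus : (u ∩ s).Nonempty) (hut : (u ∩ t).Nonempty)
    (hst : s ∩ t = ∅) (hsu : s ≠ u) (htu : t ≠ u) :
    ∀ n : ℕ, ∀ D : Finset (Finset V), D.card = n → D ⊆ E → (∀ d ∈ D, d ∩ u = ∅) →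
    (∀ Z : Finset (Finset V), Z ⊆ insert s (insert t D) → s ∈ Z →
      (∀ z ∈ Z, ∀ c ∈ insert s (insert t D), (z ∩ c).Nonempty → c ∈ Z) → t ∈ Z) → False := by
  have hst' : s ≠ t := by
    rintro rfl
    rw [Finset.inter_self] at hst
    rw [hst] at hus
    simp at hus
  intro n
  induction n with
  | zero =>
    intro D hD hDE hDu hP
    rw [Finset.card_eq_zero] at hD
    subst hD
    have := hP {s} (by simp) (by simp) (by
      intro z hz c hc hzc
      simp only [Finset.mem_singleton] at hz
      subst hz
      simp only [Finset.mem_insert, Finset.notMem_empty, or_false] at hc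
      rcases hc with rfl | rfl
      · simp
      · rw [hst] at hzc; simp at hzc)
    simp at this
    exact hst' this.symm
  | succ n ih =>
    intro D hD hDE hDu hP
    have hmem : ∀ {a b : Finset V} {w : V}, w ∈ a → w ∈ b → a ∩ b = ∅ → False := by
      intro a b w ha hb h
      have : w ∈ a ∩ b := Finset.mem_inter.mpr ⟨ha, hb⟩
      rw [h] at this
      simp at this
    obtain ⟨x, hx⟩ := hl (insert u (insert s (insert t D))) (by
      intro e he
      simp only [Finset.mem_insert] at he
      rcases he with rfl | rfl | rfl | he
      · exact hu
      · exact hs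
      · exact ht
      · exact hDE he) ⟨u, by simp⟩
    obtain ⟨p, hp⟩ := hus
    obtain ⟨q, hq⟩ := hut
    rw [Finset.mem_inter] at hp hq
    have hsD : s ∉ D := fun h => hmem hp.2 hp.1 (hDu s h)
    have htD : t ∉ D := fun h => hmem hq.2 hq.1 (hDu t h)
    have hxm := hx.1
    simp only [Finset.mem_insert] at hxm
    rcases hxm with rfl | rfl | rfl | hxD
    · obtain ⟨y, hy, hyx, h⟩ := leaf_joint (z := s) hx (by simp) hsu
      have h1 := h s (by simp) hsu p hp.1 hp.2
      have h2 := h t (by simp) htu q hq.1 hq.2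
      simp only [Finset.mem_insert] at hy
      rcases hy with rfl | rfl | rfl | hyD
      · exact hyx rfl
      · exact hmem h2 hq.2 hst
      · exact hmem hp.2 h1 hst
      · exact hmem h1 hp.1 (hDu y hyD)
    · obtain ⟨y, hy, hyx, h⟩ := leaf_joint (z := t) hx (by simp) hst'.symm
      have h1 := h u (by simp) hsu.symm p hp.2 hp.1
      simp only [Finset.mem_insert] at hy
      rcases hy with rfl | rfl | rfl | hyD
      · have := hP {x} (by simp) (by simp) (by
          intro z hz c hc hzc
          simp only [Finset.mem_singleton] at hz
          subst hz
          simp only [Finset.mem_insert] at hc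
          rcases hc with rfl | rfl | hc
          · simp
          · rw [hst] at hzc; simp at hzc
          · obtain ⟨w, hw⟩ := hzc
            rw [Finset.mem_inter] at hw
            have := h c (by simp [hc]) (by rintro rfl; exact hsD hc) w hw.1 hw.2
            exact (hmem hw.2 this (hDu c hc)).elim)
        simp at this
        exact hst' this.symm
      · exact hyx rfl
      · exact hmem hp.2 h1 hst
      · exact hmem h1 hp.1 (hDu y hyD)
    · obtain ⟨y, hy, hyx, h⟩ := leaf_joint (z := s) hx (by simp) hst'
      have h1 := h u (by simp) htu.symm q hq.2 hq.1
      simp only [Finset.mem_insert] at hy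
      rcases hy with rfl | rfl | rfl | hyD
      · have := hP (insert s D) (by
            intro e; simp only [Finset.mem_insert]; tauto) (by simp) (by
          intro z hz c hc hzc
          simp only [Finset.mem_insert] at hz hc ⊢
          rcases hc with rfl | rfl | hc
          · simp
          · obtain ⟨w, hw⟩ := hzc
            rw [Finset.mem_inter] at hw
            rcases hz with rfl | hz
            · exact (hmem hw.1 hw.2 hst).elim
            · have := h z (by simp [hz]) (by rintro rfl; exact htD hz) w hw.2 hw.1
              exact (hmem hw.1 this (hDu z hz)).elim
          · exact Or.inr hc)
        simp only [Finset.mem_insert] at this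
        rcases this with h | h
        · exact hst' h.symm
        · exact htD h
      · exact hmem h1 hq.2 hst
      · exact hyx rfl
      · exact hmem h1 hq.1 (hDu y hyD)
    · have hsx : s ≠ x := by rintro rfl; exact hsD hxD
      have htx : t ≠ x := by rintro rfl; exact htD hxD
      obtain ⟨y, hy, hyx, h⟩ := leaf_joint (z := s) hx (by simp) hsx
      refine ih (D.erase x) (by rw [Finset.card_erase_of_mem hxD]; omega)
        ((Finset.erase_subset _ _).trans hDE) (fun d hd => hDu d (Finset.mem_of_mem_erase hd)) ?_
      intro Z hZ hsZ hcl
      have hxZ : ∀ z ∈ Z, z ≠ x := by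
        intro z hz
        have := hZ hz
        simp only [Finset.mem_insert, Finset.mem_erase] at this
        rcases this with rfl | rfl | h
        · exact hsx
        · exact htx
        · exact h.1
      have hZ2 : Z ⊆ insert s (insert t D) := by
        intro e he
        have := hZ he
        simp only [Finset.mem_insert, Finset.mem_erase] at this ⊢
        tauto
      have hback : ∀ c ∈ insert s (insert t D), c ≠ x → c ∈ insert s (insert t (D.erase x)) := by
        intro c hc hcx
        simp only [Finset.mem_insert, Finset.mem_erase] at hc ⊢
        tauto
      by_cases hyZ : y ∈ Z
      · have := hP (insert x Z) (by
          intro e he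
          rw [Finset.mem_insert] at he
          rcases he with rfl | he
          · simp [hxD]
          · exact hZ2 he) (Finset.mem_insert_of_mem hsZ) (by
          intro z hz c hc hzc
          by_cases hcx : c = x
          · rw [hcx]; simp
          refine Finset.mem_insert_of_mem ?_
          rw [Finset.mem_insert] at hz
          rcases hz with rfl | hz
          · obtain ⟨w, hw⟩ := hzc
            rw [Finset.mem_inter] at hw
            have := h c (Finset.mem_insert_of_mem hc) hcx w hw.1 hw.2
            exact hcl y hyZ c (hback c hc hcx) ⟨w, Finset.mem_inter.mpr ⟨this, hw.2⟩⟩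
          · exact hcl z hz c (hback c hc hcx) hzc)
        rw [Finset.mem_insert] at this
        exact this.resolve_left htx
      · refine hP Z hZ2 hsZ ?_
        intro z hz c hc hzc
        by_cases hcx : c = x
        · exfalso
          subst hcx
          obtain ⟨w, hw⟩ := hzc
          rw [Finset.mem_inter] at hw
          have hwy := h z (Finset.mem_insert_of_mem (hZ2 hz)) (hxZ z hz) w hw.2 hw.1
          rw [Finset.mem_insert] at hy
          rcases hy with rfl | hy
          · exact hmem hw.2 hwy (hDu c hxD)
          · exact hyZ (hcl z hz y (hback y hy hyx) ⟨w, Finset.mem_inter.mpr ⟨hw.1, hwy⟩⟩)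
        · exact hcl z hz c (hback c hc hcx) hzc

theorem dirac (n : ℕ) : ∀ E : Finset (Finset V), E.card = n → HasLeafProp E →
    (∀ e ∈ E, e.Nonempty) → ∀ u ∈ E, (∀ e ∈ E, (e ∩ u).Nonempty) ∨
      ∃ e ∈ E, e ∩ u = ∅ ∧ ∃ ρ ∈ e, ∀ H ∈ E, (H ∩ e).Nonempty → ρ ∈ H := by
  induction n using Nat.strong_induction_on with
  | _ n ih =>
  intro E hn hl hne u hu
  by_cases hall : ∀ e ∈ E, (e ∩ u).Nonempty
  · exact Or.inl hall
  right
  push Not at hall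
  obtain ⟨e0, he0, he0u⟩ := hall
  set N := E.filter (fun e => e ∩ u = ∅) with hN
  set comps := N.powerset.filter (fun C => C.Nonempty ∧
    ∀ c ∈ C, ∀ m ∈ N, (c ∩ m).Nonempty → m ∈ C) with hcomps
  have hNc : N ∈ comps := by
    rw [hcomps, Finset.mem_filter, Finset.mem_powerset]
    exact ⟨subset_rfl, ⟨e0, Finset.mem_filter.mpr ⟨he0, he0u⟩⟩, fun _ _ m hm _ => hm⟩
  obtain ⟨C, hC, hCmin⟩ := Finset.exists_min_image comps Finset.card ⟨N, hNc⟩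
  rw [hcomps, Finset.mem_filter, Finset.mem_powerset] at hC
  obtain ⟨hCN, hCne, hCcl⟩ := hC
  have hCE : C ⊆ E := hCN.trans (Finset.filter_subset _ _)
  have hCu : ∀ c ∈ C, c ∩ u = ∅ := fun c hc => (Finset.mem_filter.mp (hCN hc)).2
  have hconn : ∀ Z ⊆ C, Z.Nonempty → (∀ z ∈ Z, ∀ c ∈ C, (z ∩ c).Nonempty → c ∈ Z) → Z = C := by
    intro Z hZ hZne hcl
    refine Finset.eq_of_subset_of_card_le hZ (hCmin Z ?_)
    rw [hcomps, Finset.mem_filter, Finset.mem_powerset]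
    exact ⟨hZ.trans hCN, hZne, fun c hc m hm hcm => hcl c hc m (hCcl c (hZ hc) m hm hcm) hcm⟩
  set S := E.filter (fun H => H ∉ C ∧ ∃ c ∈ C, (H ∩ c).Nonempty) with hS
  have hSm : ∀ s ∈ S, s ∈ E ∧ s ∉ C ∧ ∃ c ∈ C, (s ∩ c).Nonempty := fun s hs =>
    Finset.mem_filter.mp hs
  have huS : u ∉ S := by
    intro h
    obtain ⟨-, -, c, hc, hcu⟩ := hSm u h
    rw [Finset.inter_comm, hCu c hc] at hcu
    simp at hcu
  have huC : u ∉ C := by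
    intro h
    have := hCu u h
    rw [Finset.inter_self] at this
    exact (hne u hu).ne_empty this
  have hSu : ∀ s ∈ S, (u ∩ s).Nonempty := by
    intro s hs
    obtain ⟨h1, h2, c, hc, hcs⟩ := hSm s hs
    by_contra hcon
    rw [Finset.not_nonempty_iff_eq_empty, Finset.inter_comm] at hcon
    exact h2 (hCcl c hc s (Finset.mem_filter.mpr ⟨h1, hcon⟩) (by rwa [Finset.inter_comm]))
  have hSS : ∀ s ∈ S, ∀ t ∈ S, (s ∩ t).Nonempty := by
    intro s hs t ht
    by_contra hcon
    rw [Finset.not_nonempty_iff_eq_empty] at hcon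
    obtain ⟨hsE, hsC, c, hc, hsc⟩ := hSm s hs
    obtain ⟨htE, htC, c', hc', htc⟩ := hSm t ht
    refine sep_inter hl hu hsE htE (hSu s hs) (hSu t ht) hcon (by rintro rfl; exact huS hs)
      (by rintro rfl; exact huS ht) C.card C rfl hCE hCu ?_
    intro Z hZ hsZ hcl
    have hCs : ∀ {a}, a ∈ C → a ∈ insert s (insert t C) := fun h => by simp [h]
    have hcZ : c ∈ Z := hcl s hsZ c (hCs hc) hsc
    have := hconn (Z ∩ C) Finset.inter_subset_right ⟨c, Finset.mem_inter.mpr ⟨hcZ, hc⟩⟩ (by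
      intro z hz d hd hzd
      exact Finset.mem_inter.mpr ⟨hcl z (Finset.mem_inter.mp hz).1 d (hCs hd) hzd, hd⟩)
    have hc'Z : c' ∈ Z := by
      rw [← this] at hc'
      exact (Finset.mem_inter.mp hc').1
    exact hcl c' hc'Z t (by simp) (by rwa [Finset.inter_comm])
  have hE'E : C ∪ S ⊆ E := Finset.union_subset hCE (Finset.filter_subset _ _)
  have hfin : ∀ e ∈ C, (∃ ρ ∈ e, ∀ H ∈ C ∪ S, (H ∩ e).Nonempty → ρ ∈ H) →
      ∃ e ∈ E, e ∩ u = ∅ ∧ ∃ ρ ∈ e, ∀ H ∈ E, (H ∩ e).Nonempty → ρ ∈ H := by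
    rintro e he ⟨ρ, hρ, h⟩
    refine ⟨e, hCE he, hCu e he, ρ, hρ, fun H hH hHe => h H ?_ hHe⟩
    rw [Finset.mem_union]
    by_cases hHC : H ∈ C
    · exact Or.inl hHC
    · exact Or.inr (Finset.mem_filter.mpr ⟨hH, hHC, e, he, hHe⟩)
  have hlt : (C ∪ S).card < n := by
    rw [← hn]
    refine Finset.card_lt_card (Finset.ssubset_iff_of_subset hE'E |>.mpr ⟨u, hu, ?_⟩)
    simp [huC, huS]
  have hne' : ∀ e ∈ C ∪ S, e.Nonempty := fun e he => hne e (hE'E he)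
  by_cases hpw : ∀ a ∈ C ∪ S, ∀ b ∈ C ∪ S, (a ∩ b).Nonempty
  · obtain ⟨c, hc⟩ := hCne
    obtain ⟨v, hv⟩ := helly _ (C ∪ S) rfl (leafProp_mono hl hE'E)
      ⟨c, Finset.mem_union_left _ hc⟩ hpw
    exact hfin c hc ⟨v, hv c (Finset.mem_union_left _ hc), fun H hH _ => hv H hH⟩
  · have main : ∃ a ∈ C ∪ S, (∃ b ∈ C ∪ S, b ∩ a = ∅) ∧ ∀ s ∈ S, (s ∩ a).Nonempty := by
      by_cases hs : ∃ s ∈ S, ∃ b ∈ C ∪ S, b ∩ s = ∅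
      · obtain ⟨s, hs, hb⟩ := hs
        exact ⟨s, Finset.mem_union_right _ hs, hb, fun t ht => hSS t ht s hs⟩
      · push Not at hpw hs
        obtain ⟨a, ha, b, hb, hab⟩ := hpw
        refine ⟨a, ha, ⟨b, hb, by rwa [Finset.inter_comm]⟩, fun s hs' => ?_⟩
        rw [Finset.inter_comm]
        exact hs s hs' a ha
    obtain ⟨a, ha, ⟨b, hb, hba⟩, hsa⟩ := main
    rcases ih _ hlt (C ∪ S) rfl (leafProp_mono hl hE'E) hne' a ha with h | ⟨e, he, hea, h⟩
    · exact absurd hba (h b hb).ne_empty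
    · refine hfin e ?_ h
      rw [Finset.mem_union] at he
      rcases he with he | he
      · exact he
      · exact absurd hea (hsa e he).ne_empty

theorem exists_good {E : Finset (Finset V)} (hl : HasLeafProp E) (hne : ∀ e ∈ E, e.Nonempty)
    (h0 : E.Nonempty) : ∃ e ∈ E, ∃ ρ ∈ e, ∀ H ∈ E, (H ∩ e).Nonempty → ρ ∈ H := by
  by_cases h : ∃ u ∈ E, ¬ ∀ e ∈ E, (e ∩ u).Nonempty
  · obtain ⟨u, hu, hnu⟩ := h
    obtain ⟨e, he, -, h⟩ := (dirac _ E rfl hl hne u hu).resolve_left hnu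
    exact ⟨e, he, h⟩
  · push Not at h
    obtain ⟨v, hv⟩ := helly _ E rfl hl h0 (fun a ha b hb => h b hb a ha)
    obtain ⟨e, he⟩ := h0
    exact ⟨e, he, v, hv e he, fun H hH _ => hv H hH⟩


/-- The combinatorial data used in the induction: a forest-like collection `H` together with a
distinguished set `B` of pairwise disjoint blocks covering everything, on each of which the
traces of the members of `H` form a chain. -/
structure St (H B : Finset (Finset V)) : Prop where
  sub : B ⊆ H
  disj : ∀ b ∈ B, ∀ b' ∈ B, ∀ v ∈ b, v ∈ b' → b = b'
  ne : ∀ h ∈ H, h.Nonempty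
  cov : ∀ h ∈ H, ∀ v ∈ h, ∃ b ∈ B, v ∈ b
  chain : ∀ b ∈ B, ∀ h ∈ H, ∀ h' ∈ H, (∀ v ∈ b, v ∈ h → v ∈ h') ∨ (∀ v ∈ b, v ∈ h' → v ∈ h)
  leaf : HasLeafProp H

/-- `A` contains a matching of size `k`. -/
def Mt (H : Finset (Finset V)) (k : ℕ) (A : Finset V) : Prop :=
  ∃ M : Finset (Finset V), M ⊆ H ∧ (∀ F ∈ M, ∀ G ∈ M, ∀ v ∈ F, v ∈ G → F = G) ∧
    M.card = k ∧ ∀ F ∈ M, F ⊆ A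

def UU (Z : Finset V) (H : Finset (Finset V)) (k : ℕ) (A : Finset V) : Prop :=
  (∃ v ∈ A, v ∈ Z) ∨ Mt H k A

theorem VD_congr {d : ℕ} {U U' : Finset V → Prop} (h : VD d U) (hc : ∀ A, U A ↔ U' A) :
    VD d U' := by
  have : U = U' := funext fun A => propext (hc A)
  rwa [← this]

theorem special_block {H B : Finset (Finset V)} (hs : St H B) (hB : B.Nonempty) :
    ∃ b ∈ B, ∀ h ∈ H, ∀ h' ∈ H, (∃ v ∈ b, v ∈ h) → (∃ v ∈ b, v ∈ h') → ¬ h ⊆ b → ¬ h' ⊆ b →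
      ∃ w ∈ h, w ∈ h' ∧ w ∉ b := by
  have hm : ∀ b ∈ B, ∀ h ∈ H, (∃ v ∈ b, v ∈ h) → ¬ h ⊆ b →
      h ∈ H.filter (fun h => ∀ b ∈ B, ¬ h ⊆ b) := by
    rintro b hb h hh ⟨v, hvb, hvh⟩ hnb
    refine Finset.mem_filter.mpr ⟨hh, fun b' hb' hsub => hnb ?_⟩
    rw [hs.disj b hb b' hb' v hvb (hsub hvh)]
    exact hsub
  by_cases hE : (H.filter (fun h => ∀ b ∈ B, ¬ h ⊆ b)).Nonempty
  · obtain ⟨e, he, ρ, hρ, hgood⟩ := exists_good (leafProp_mono hs.leaf (Finset.filter_subset _ _))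
      (fun e he => hs.ne e (Finset.mem_filter.mp he).1) hE
    obtain ⟨heH, heb⟩ := Finset.mem_filter.mp he
    obtain ⟨bj, hbj, hρj⟩ := hs.cov e heH ρ hρ
    obtain ⟨w, hwe, hwj⟩ := Finset.not_subset.mp (heb bj hbj)
    obtain ⟨b, hb, hwb⟩ := hs.cov e heH w hwe
    have hρb : ρ ∉ b := by
      intro h
      rw [hs.disj bj hbj b hb ρ hρj h] at hwj
      exact hwj hwb
    have key : ∀ h ∈ H, (∃ v ∈ b, v ∈ h) → ¬ h ⊆ b → ρ ∈ h := by
      rintro h hh ⟨v, hvb, hvh⟩ hnb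
      refine hgood h (hm b hb h hh ⟨v, hvb, hvh⟩ hnb) ?_
      rcases hs.chain b hb h hh e heH with hc | hc
      · exact ⟨v, Finset.mem_inter.mpr ⟨hvh, hc v hvb hvh⟩⟩
      · exact ⟨w, Finset.mem_inter.mpr ⟨hc w hwb hwe, hwe⟩⟩
    exact ⟨b, hb, fun h hh h' hh' h1 h2 h3 h4 => ⟨ρ, key h hh h1 h3, key h' hh' h2 h4, hρb⟩⟩
  · obtain ⟨b, hb⟩ := hB
    refine ⟨b, hb, fun h hh h' _ h1 _ h3 _ => absurd ⟨h, hm b hb h hh h1 h3⟩ hE⟩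

theorem mt_card_le {H B : Finset (Finset V)} (hs : St H B) {k : ℕ} {A : Finset V}
    (h : Mt H k A) : k ≤ B.card := by
  obtain ⟨M, hM, hd, rfl, -⟩ := h
  have hex : ∀ h : Finset V, ∃ b : Finset V, h ∈ M → b ∈ B ∧ ∃ v ∈ b, v ∈ h := by
    intro h
    by_cases hh : h ∈ M
    · obtain ⟨v, hv⟩ := hs.ne h (hM hh)
      obtain ⟨b, hb, hvb⟩ := hs.cov h (hM hh) v hv
      exact ⟨b, fun _ => ⟨hb, v, hvb, hv⟩⟩
    · exact ⟨∅, fun h => absurd h hh⟩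
  choose f hf using hex
  refine Finset.card_le_card_of_injOn f (fun h hh => (hf h hh).1) ?_
  intro h hh h' hh' heq
  obtain ⟨hb, v, hvb, hv⟩ := hf h hh
  obtain ⟨hb', v', hvb', hv'⟩ := hf h' hh'
  rw [← heq] at hvb'
  rcases hs.chain _ hb h (hM hh) h' (hM hh') with hc | hc
  · exact hd h hh h' hh' v hv (hc v hvb hv)
  · exact hd h hh h' hh' v' (hc v' hvb' hv') hv'

theorem leafProp_image {S : Finset (Finset V)} (h : HasLeafProp S) (b : Finset V) :
    HasLeafProp (S.image fun F => F \ b) := by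
  intro T hT hne
  have hex : ∀ F : Finset V, ∃ G : Finset V, F ∈ T → G ∈ S ∧ G \ b = F := by
    intro F
    by_cases hF : F ∈ T
    · obtain ⟨G, hG, hGF⟩ := Finset.mem_image.mp (hT hF)
      exact ⟨G, fun _ => ⟨hG, hGF⟩⟩
    · exact ⟨∅, fun h => absurd h hF⟩
  choose g hg using hex
  have hinj : ∀ F ∈ T, ∀ G ∈ T, g F = g G → F = G := by
    intro F hF G hG hfg
    rw [← (hg F hF).2, ← (hg G hG).2, hfg]
  have hmem : ∀ F ∈ T, ∀ v, v ∈ F ↔ v ∈ g F ∧ v ∉ b := by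
    intro F hF v
    conv_lhs => rw [← (hg F hF).2]
    rw [Finset.mem_sdiff]
  obtain ⟨F0, hF0, hF0'⟩ := h (T.image g) (by
    intro x hx
    obtain ⟨F, hF, rfl⟩ := Finset.mem_image.mp hx
    exact (hg F hF).1) (hne.image g)
  obtain ⟨F, hF, rfl⟩ := Finset.mem_image.mp hF0
  refine ⟨F, hF, ?_⟩
  rcases hF0' with h1 | ⟨G0, hG0, hne0, h1⟩
  · exact Or.inl fun H hH => hinj H hH F hF (h1 _ (Finset.mem_image_of_mem g hH))
  · obtain ⟨G, hG, rfl⟩ := Finset.mem_image.mp hG0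
    refine Or.inr ⟨G, hG, fun h => hne0 (by rw [h]), fun H hH hHF v hv => ?_⟩
    rw [Finset.mem_inter] at hv ⊢
    have a1 := (hmem F hF v).mp hv.1
    have a2 := (hmem H hH v).mp hv.2
    have := h1 (g H) (Finset.mem_image_of_mem g hH) (fun h => hHF (hinj H hH F hF h))
      (Finset.mem_inter.mpr ⟨a1.1, a2.1⟩)
    exact ⟨hv.1, (hmem G hG v).mpr ⟨(Finset.mem_inter.mp this).2, a1.2⟩⟩

theorem St_del {H B : Finset (Finset V)} (hs : St H B) {b : Finset V} (hb : b ∈ B) :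
    St (H.filter fun h => ∀ v ∈ h, v ∉ b) (B.erase b) where
  sub := by
    intro b' hb'
    obtain ⟨hne, hb'⟩ := Finset.mem_erase.mp hb'
    exact Finset.mem_filter.mpr ⟨hs.sub hb', fun v hv hvb => hne (hs.disj b' hb' b hb v hv hvb)⟩
  disj := fun x hx y hy => hs.disj x (Finset.mem_of_mem_erase hx) y (Finset.mem_of_mem_erase hy)
  ne := fun h hh => hs.ne h (Finset.mem_filter.mp hh).1
  cov := by
    intro h hh v hv
    obtain ⟨hh, hhb⟩ := Finset.mem_filter.mp hh
    obtain ⟨b', hb', hvb'⟩ := hs.cov h hh v hv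
    refine ⟨b', Finset.mem_erase.mpr ⟨?_, hb'⟩, hvb'⟩
    rintro rfl
    exact hhb v hv hvb'
  chain := fun x hx h hh h' hh' => hs.chain x (Finset.mem_of_mem_erase hx) h
    (Finset.mem_filter.mp hh).1 h' (Finset.mem_filter.mp hh').1
  leaf := leafProp_mono hs.leaf (Finset.filter_subset _ _)

theorem St_contr {H B : Finset (Finset V)} (hs : St H B) {b : Finset V} (hb : b ∈ B)
    {A : Finset V} (hA : ∀ h ∈ H, ¬ h ⊆ A) :
    St ((H.filter fun h => h ∩ b ⊆ A).image fun h => h \ b) (B.erase b) where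
  sub := by
    intro b' hb'
    obtain ⟨hne, hb'⟩ := Finset.mem_erase.mp hb'
    have hd : ∀ v ∈ b', v ∉ b := fun v hv hvb => hne (hs.disj b' hb' b hb v hv hvb)
    refine Finset.mem_image.mpr ⟨b', Finset.mem_filter.mpr ⟨hs.sub hb', ?_⟩, ?_⟩
    · intro v hv
      rw [Finset.mem_inter] at hv
      exact absurd hv.2 (hd v hv.1)
    · ext v
      rw [Finset.mem_sdiff]
      exact ⟨fun h => h.1, fun h => ⟨h, hd v h⟩⟩
  disj := fun x hx y hy => hs.disj x (Finset.mem_of_mem_erase hx) y (Finset.mem_of_mem_erase hy)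
  ne := by
    intro h hh
    obtain ⟨h, hh1, rfl⟩ := Finset.mem_image.mp hh
    obtain ⟨hh, hhA⟩ := Finset.mem_filter.mp hh1
    rw [Finset.nonempty_iff_ne_empty]
    intro he
    rw [Finset.sdiff_eq_empty_iff_subset] at he
    exact hA h hh (fun v hv => hhA (Finset.mem_inter.mpr ⟨hv, he hv⟩))
  cov := by
    intro h hh v hv
    obtain ⟨h, hh1, rfl⟩ := Finset.mem_image.mp hh
    obtain ⟨hh, -⟩ := Finset.mem_filter.mp hh1
    rw [Finset.mem_sdiff] at hv
    obtain ⟨b', hb', hvb'⟩ := hs.cov h hh v hv.1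
    refine ⟨b', Finset.mem_erase.mpr ⟨?_, hb'⟩, hvb'⟩
    rintro rfl
    exact hv.2 hvb'
  chain := by
    intro x hx h hh h' hh'
    obtain ⟨h, hh1, rfl⟩ := Finset.mem_image.mp hh
    obtain ⟨h', hh1', rfl⟩ := Finset.mem_image.mp hh'
    simp only [Finset.mem_sdiff]
    rcases hs.chain x (Finset.mem_of_mem_erase hx) h (Finset.mem_filter.mp hh1).1 h'
      (Finset.mem_filter.mp hh1').1 with hc | hc
    · exact Or.inl fun v hv hvh => ⟨hc v hv hvh.1, hvh.2⟩
    · exact Or.inr fun v hv hvh => ⟨hc v hv hvh.1, hvh.2⟩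
  leaf := leafProp_image (leafProp_mono hs.leaf (Finset.filter_subset _ _)) b

theorem UU_del {H B : Finset (Finset V)} (hs : St H B) {b : Finset V} (hb : b ∈ B)
    {A Z : Finset V} {k : ℕ} (hAb : A ⊆ b) (hZ : ∀ v ∈ b, v ∉ Z) {h0 : Finset V} (hh0 : h0 ∈ H)
    (hh0A : h0 ⊆ A) (S : Finset V) :
    UU Z (H.filter fun h => ∀ v ∈ h, v ∉ b) k S ↔ UU Z H (k + 1) (S ∪ A) := by
  have hh0b := hh0A.trans hAb
  obtain ⟨p, hp⟩ := hs.ne h0 hh0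
  constructor
  · rintro (⟨v, hv, hvZ⟩ | ⟨M, hM, hd, hc, hMS⟩)
    · exact Or.inl ⟨v, Finset.mem_union_left _ hv, hvZ⟩
    · right
      have hMb : ∀ h ∈ M, ∀ v ∈ h, v ∉ b := fun h hh => (Finset.mem_filter.mp (hM hh)).2
      have hn : h0 ∉ M := fun hh => hMb h0 hh p hp (hh0b hp)
      refine ⟨insert h0 M, ?_, ?_, by rw [Finset.card_insert_of_notMem hn, hc], ?_⟩
      · intro h hh
        rcases Finset.mem_insert.mp hh with rfl | hh
        · exact hh0
        · exact (Finset.mem_filter.mp (hM hh)).1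
      · intro F hF G hG v hvF hvG
        rcases Finset.mem_insert.mp hF with hF | hF <;>
          rcases Finset.mem_insert.mp hG with hG | hG
        · rw [hF, hG]
        · rw [hF] at hvF
          exact absurd (hh0b hvF) (hMb G hG v hvG)
        · rw [hG] at hvG
          exact absurd (hh0b hvG) (hMb F hF v hvF)
        · exact hd F hF G hG v hvF hvG
      · intro F hF
        rcases Finset.mem_insert.mp hF with rfl | hF
        · exact hh0A.trans Finset.subset_union_right
        · exact (hMS F hF).trans Finset.subset_union_left
  · rintro (⟨v, hv, hvZ⟩ | ⟨M, hM, hd, hc, hMS⟩)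
    · rcases Finset.mem_union.mp hv with hv | hv
      · exact Or.inl ⟨v, hv, hvZ⟩
      · exact absurd hvZ (hZ v (hAb hv))
    · right
      have h1 : (M.filter fun h => ¬ ∀ v ∈ h, v ∉ b).card ≤ 1 := by
        rw [Finset.card_le_one]
        intro F hF G hG
        obtain ⟨hF, hFb⟩ := Finset.mem_filter.mp hF
        obtain ⟨hG, hGb⟩ := Finset.mem_filter.mp hG
        push Not at hFb hGb
        obtain ⟨v, hv, hvb⟩ := hFb
        obtain ⟨w, hw, hwb⟩ := hGb
        rcases hs.chain b hb F (hM hF) G (hM hG) with hc | hc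
        · exact hd F hF G hG v hv (hc v hvb hv)
        · exact hd F hF G hG w (hc w hwb hw) hw
      have h2 := Finset.card_filter_add_card_filter_not (s := M) (fun h => ∀ v ∈ h, v ∉ b)
      obtain ⟨M', hM', hcard⟩ := Finset.exists_subset_card_eq
        (s := M.filter fun h => ∀ v ∈ h, v ∉ b) (n := k) (by omega)
      have hM'm : ∀ F ∈ M', F ∈ M ∧ ∀ v ∈ F, v ∉ b := fun F hF => Finset.mem_filter.mp (hM' hF)
      refine ⟨M', fun F hF => Finset.mem_filter.mpr ⟨hM (hM'm F hF).1, (hM'm F hF).2⟩,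
        fun F hF G hG => hd F (hM'm F hF).1 G (hM'm G hG).1, hcard, fun F hF v hv => ?_⟩
      rcases Finset.mem_union.mp (hMS F (hM'm F hF).1 hv) with h | h
      · exact h
      · exact absurd (hAb h) ((hM'm F hF).2 v hv)

theorem UU_contr {H : Finset (Finset V)} {b : Finset V}
    (hspec : ∀ h ∈ H, ∀ h' ∈ H, (∃ v ∈ b, v ∈ h) → (∃ v ∈ b, v ∈ h') → ¬ h ⊆ b → ¬ h' ⊆ b →
      ∃ w ∈ h, w ∈ h' ∧ w ∉ b)
    {A Z : Finset V} {k : ℕ} (hAb : A ⊆ b) (hZ : ∀ v ∈ b, v ∉ Z) (hA : ∀ h ∈ H, ¬ h ⊆ A)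
    {v : V} (hvA : v ∉ A) (hini : ∀ h ∈ H, h ∩ b ⊆ insert v A ∨ insert v A ⊆ h)
    (S : Finset V) :
    UU (insert v Z) ((H.filter fun h => h ∩ b ⊆ A).image fun h => h \ b) k S ↔
      (v ∈ S ∨ UU Z H k (S ∪ A)) := by
  have hnb : ∀ h ∈ H, h ∩ b ⊆ A → ¬ h ⊆ b := fun h hh h1 h2 =>
    hA h hh fun w hw => h1 (Finset.mem_inter.mpr ⟨hw, h2 hw⟩)
  constructor
  · rintro (⟨w, hw, hwZ⟩ | ⟨M, hM, hd, hc, hMS⟩)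
    · rcases Finset.mem_insert.mp hwZ with rfl | hwZ
      · exact Or.inl hw
      · exact Or.inr (Or.inl ⟨w, Finset.mem_union_left _ hw, hwZ⟩)
    · right; right
      have hex : ∀ F : Finset V, ∃ G : Finset V, F ∈ M → (G ∈ H ∧ G ∩ b ⊆ A) ∧ G \ b = F := by
        intro F
        by_cases hF : F ∈ M
        · obtain ⟨G, hG, hGF⟩ := Finset.mem_image.mp (hM hF)
          exact ⟨G, fun _ => ⟨Finset.mem_filter.mp hG, hGF⟩⟩
        · exact ⟨∅, fun h => absurd h hF⟩
      choose g hg using hex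
      have hinj : ∀ F ∈ M, ∀ G ∈ M, g F = g G → F = G := by
        intro F hF G hG hfg
        rw [← (hg F hF).2, ← (hg G hG).2, hfg]
      have hmem : ∀ F ∈ M, ∀ v, v ∈ F ↔ v ∈ g F ∧ v ∉ b := by
        intro F hF v
        conv_lhs => rw [← (hg F hF).2]
        rw [Finset.mem_sdiff]
      refine ⟨M.image g, ?_, ?_, ?_, ?_⟩
      · intro x hx
        obtain ⟨F, hF, rfl⟩ := Finset.mem_image.mp hx
        exact (hg F hF).1.1
      · intro x hx y hy w hwx hwy
        obtain ⟨F, hF, rfl⟩ := Finset.mem_image.mp hx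
        obtain ⟨G, hG, rfl⟩ := Finset.mem_image.mp hy
        have : ∃ w ∈ g F, w ∈ g G ∧ w ∉ b := by
          by_cases hwb : w ∈ b
          · exact hspec _ (hg F hF).1.1 _ (hg G hG).1.1 ⟨w, hwb, hwx⟩ ⟨w, hwb, hwy⟩
              (hnb _ (hg F hF).1.1 (hg F hF).1.2) (hnb _ (hg G hG).1.1 (hg G hG).1.2)
          · exact ⟨w, hwx, hwy, hwb⟩
        obtain ⟨q, h1, h2, h3⟩ := this
        rw [hd F hF G hG q ((hmem F hF q).mpr ⟨h1, h3⟩) ((hmem G hG q).mpr ⟨h2, h3⟩)]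
      · rw [Finset.card_image_of_injOn (fun F hF G hG => hinj F hF G hG), hc]
      · intro x hx
        obtain ⟨F, hF, rfl⟩ := Finset.mem_image.mp hx
        intro w hw
        by_cases hwb : w ∈ b
        · exact Finset.mem_union_right _ ((hg F hF).1.2 (Finset.mem_inter.mpr ⟨hw, hwb⟩))
        · exact Finset.mem_union_left _ (hMS F hF ((hmem F hF w).mpr ⟨hw, hwb⟩))
  · rintro (hv | ⟨w, hw, hwZ⟩ | ⟨M, hM, hd, hc, hMS⟩)
    · exact Or.inl ⟨v, hv, Finset.mem_insert_self _ _⟩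
    · rcases Finset.mem_union.mp hw with hw | hw
      · exact Or.inl ⟨w, hw, Finset.mem_insert_of_mem hwZ⟩
      · exact absurd hwZ (hZ w (hAb hw))
    · by_cases hvS : v ∈ S
      · exact Or.inl ⟨v, hvS, Finset.mem_insert_self _ _⟩
      right
      have hvM : ∀ F ∈ M, v ∉ F := by
        intro F hF hvF
        rcases Finset.mem_union.mp (hMS F hF hvF) with h | h
        · exact hvS h
        · exact hvA h
      have hFA : ∀ F ∈ M, F ∩ b ⊆ A := by
        intro F hF w hw
        rcases hini F (hM hF) with h | h
        · rcases Finset.mem_insert.mp (h hw) with rfl | h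
          · exact absurd (Finset.mem_inter.mp hw).1 (hvM F hF)
          · exact h
        · exact absurd (h (Finset.mem_insert_self _ _)) (hvM F hF)
      have hwit : ∀ F ∈ M, ∃ w ∈ F, w ∉ b := fun F hF =>
        Finset.not_subset.mp (hnb F (hM hF) (hFA F hF))
      refine ⟨M.image fun h => h \ b, ?_, ?_, ?_, ?_⟩
      · intro x hx
        obtain ⟨F, hF, rfl⟩ := Finset.mem_image.mp hx
        exact Finset.mem_image.mpr ⟨F, Finset.mem_filter.mpr ⟨hM hF, hFA F hF⟩, rfl⟩
      · intro x hx y hy w hwx hwy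
        obtain ⟨F, hF, rfl⟩ := Finset.mem_image.mp hx
        obtain ⟨G, hG, rfl⟩ := Finset.mem_image.mp hy
        rw [hd F hF G hG w (Finset.mem_sdiff.mp hwx).1 (Finset.mem_sdiff.mp hwy).1]
      · rw [Finset.card_image_of_injOn, hc]
        intro F hF G hG hFG
        obtain ⟨w, hw, hwb⟩ := hwit F hF
        have : w ∈ G \ b := by
          have h : F \ b = G \ b := hFG
          rw [← h]
          exact Finset.mem_sdiff.mpr ⟨hw, hwb⟩
        exact hd F hF G hG w hw (Finset.mem_sdiff.mp this).1
      · intro x hx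
        obtain ⟨F, hF, rfl⟩ := Finset.mem_image.mp hx
        intro w hw
        rw [Finset.mem_sdiff] at hw
        rcases Finset.mem_union.mp (hMS F hF hw.1) with h | h
        · exact h
        · exact absurd (hAb h) hw.2

theorem exists_next {H B : Finset (Finset V)} (hs : St H B) {b : Finset V} (hb : b ∈ B)
    {A : Finset V} (hA : ∀ h ∈ H, ¬ h ⊆ A)
    (hini : ∀ h ∈ H, h ∩ b ⊆ A ∨ A ⊆ h) :
    ∃ v ∈ b, v ∉ A ∧ ∀ h ∈ H, h ∩ b ⊆ insert v A ∨ insert v A ⊆ h := by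
  obtain ⟨h, hh, hmin⟩ := Finset.exists_min_image (H.filter fun h => ¬ h ∩ b ⊆ A)
    (fun h => (h ∩ b).card) ⟨b, Finset.mem_filter.mpr ⟨hs.sub hb, by
      rw [Finset.inter_self]; exact hA b (hs.sub hb)⟩⟩
  obtain ⟨hhH, hhA⟩ := Finset.mem_filter.mp hh
  obtain ⟨v, hv, hvA⟩ := Finset.not_subset.mp hhA
  rw [Finset.mem_inter] at hv
  refine ⟨v, hv.2, hvA, fun h' hh' => ?_⟩
  by_cases h1 : h' ∩ b ⊆ A
  · exact Or.inl (h1.trans (Finset.subset_insert _ _))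
  · right
    have h2 := (hini h' hh').resolve_left h1
    have h3 := hmin h' (Finset.mem_filter.mpr ⟨hh', h1⟩)
    have hvh' : v ∈ h' := by
      rcases hs.chain b hb h hhH h' hh' with hc | hc
      · exact hc v hv.2 hv.1
      · have : h' ∩ b = h ∩ b := Finset.eq_of_subset_of_card_le (fun w hw => by
          rw [Finset.mem_inter] at hw ⊢
          exact ⟨hc w hw.2 hw.1, hw.2⟩) h3
        have hv' : v ∈ h' ∩ b := by rw [this]; exact Finset.mem_inter.mpr hv
        exact (Finset.mem_inter.mp hv').1
    exact Finset.insert_subset hvh' h2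

theorem VD_extreme {r : ℕ} {H B : Finset (Finset V)} {Z : Finset V} {k d : ℕ} (hs : St H B)
    (hr : B.card = r) (hk : k = 0 ∨ k = r + 1)
    (hd : d + Z.card + r + 1 = Fintype.card V + k) : VD d (UU Z H k) := by
  rcases hk with rfl | rfl
  · refine VD.top _ _ fun A => Or.inr ⟨∅, by simp, by simp, by simp, by simp⟩
  · refine VD.base _ _ Zᶜ (by rw [Finset.card_compl]; omega) fun A => ?_
    rw [Finset.not_subset]
    simp only [Finset.mem_compl, not_not]
    constructor
    · rintro (h | h)
      · exact h
      · have := mt_card_le hs h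
        omega
    · exact Or.inl

theorem VD_main (r : ℕ) : ∀ (H B : Finset (Finset V)) (Z : Finset V) (k d : ℕ), St H B →
    B.card = r → (∀ b ∈ B, ∀ v ∈ b, v ∉ Z) → k ≤ r + 1 →
    d + Z.card + r + 1 = Fintype.card V + k → VD d (UU Z H k) := by
  induction r with
  | zero =>
    intro H B Z k d hs hr hZ hk hd
    exact VD_extreme hs hr (by omega) hd
  | succ r ih =>
    intro H B Z k d hs hr hZ hk hd
    by_cases hk0 : k = 0 ∨ k = r + 1 + 1
    · exact VD_extreme hs hr hk0 hd
    obtain ⟨k, rfl⟩ : ∃ k', k = k' + 1 := ⟨k - 1, by omega⟩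
    obtain ⟨b, hb, hspec⟩ := special_block hs (Finset.card_pos.mp (by omega))
    have hcard : (B.erase b).card = r := by rw [Finset.card_erase_of_mem hb]; omega
    have inner : ∀ m : ℕ, ∀ A : Finset V, A ⊆ b → (b \ A).card = m →
        (∀ h ∈ H, h ∩ b ⊆ A ∨ A ⊆ h) → VD d (fun S => UU Z H (k + 1) (S ∪ A)) := by
      intro m
      induction m using Nat.strong_induction_on with
      | _ m ihm =>
      intro A hAb hm hini
      by_cases hA : ∃ h ∈ H, h ⊆ A
      · obtain ⟨h0, hh0, hh0A⟩ := hA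
        refine VD_congr (ih (H.filter fun h => ∀ v ∈ h, v ∉ b) (B.erase b) Z k d (St_del hs hb)
          hcard (fun x hx => hZ x (Finset.mem_of_mem_erase hx)) (by omega) (by omega)) ?_
        exact UU_del hs hb hAb (hZ b hb) hh0 hh0A
      · push Not at hA
        obtain ⟨v, hvb, hvA, hini'⟩ := exists_next hs hb hA hini
        refine VD.step d _ v ?_ ?_
        · refine VD_congr (ihm (b \ insert v A).card ?_ (insert v A)
            (Finset.insert_subset hvb hAb) rfl hini') ?_
          · rw [← hm]
            refine Finset.card_lt_card (Finset.ssubset_iff_of_subset (Finset.sdiff_subset_sdiff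
              subset_rfl (Finset.subset_insert _ _)) |>.mpr ⟨v, ?_, ?_⟩)
            · exact Finset.mem_sdiff.mpr ⟨hvb, hvA⟩
            · simp
          · intro S
            rw [Finset.union_insert, Finset.insert_union]
        · refine VD_congr (ih _ (B.erase b) (insert v Z) (k + 1) d (St_contr hs hb hA)
            hcard ?_ (by omega) ?_) ?_
          · intro x hx w hw hwZ
            obtain ⟨hxb, hx⟩ := Finset.mem_erase.mp hx
            rcases Finset.mem_insert.mp hwZ with rfl | hwZ
            · exact hxb (hs.disj x hx b hb w hw hvb)
            · exact hZ x hx w hw hwZ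
          · rw [Finset.card_insert_of_notMem (hZ b hb v hvb)]
            omega
          · exact UU_contr hspec hAb (hZ b hb) hA hvA hini'
    refine VD_congr (inner _ ∅ (Finset.empty_subset _) rfl
      (fun h _ => Or.inr (Finset.empty_subset _))) ?_
    intro S
    rw [Finset.union_empty]


theorem grafted_leaf_of_free {T : Finset (Finset V)} (hT : IsGrafted T) {b : Finset V}
    (hb : b ∈ T) {v : V} (hv : v ∈ b) (hfree : ∀ h ∈ T, v ∈ h → h = b) : IsLeafOf T b := by
  obtain ⟨_, Fs, Gs, hunion, hdisj, hcover, hleaves, hFdisj, hrec⟩ := hT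
  rw [hleaves]
  have hb' := hb
  rw [hunion, Finset.mem_union] at hb'
  rcases hb' with h | h
  · exact h
  · obtain ⟨F, hF, hvF⟩ := hcover b h v hv
    have := hfree F (by rw [hunion]; exact Finset.mem_union_left _ hF) hvF
    rwa [this] at hF

theorem grafted_chain {S : Finset (Finset V)} (hS : IsGrafted S) :
    (∀ F ∈ S, ∀ G ∈ S, F ⊆ G → F = G) → ∀ b, IsLeafOf S b → ∀ G ∈ S, ∀ G' ∈ S,
      (∀ v ∈ b, v ∈ G → v ∈ G') ∨ (∀ v ∈ b, v ∈ G' → v ∈ G) := by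
  induction hS with
  | intro S Fs Gs hunion hdisj hcover hleaves hFdisj hrec ih =>
  intro hanti b hb G hG G' hG'
  by_cases hGb : G = b
  · right; intro v hv _; rw [hGb]; exact hv
  by_cases hGb' : G' = b
  · left; intro v hv _; rw [hGb']; exact hv
  have hdis : ∀ F ∈ Fs, F ≠ b → ∀ v ∈ b, v ∉ F := by
    intro F hF hne v hvb hvF
    have h1 := hFdisj F hF b ((hleaves b).mp hb) hne
    have : v ∈ F ∩ b := Finset.mem_inter.mpr ⟨hvF, hvb⟩
    rw [h1] at this
    simp at this
  have hmem : ∀ H ∈ S, H ∈ Fs ∨ H ∈ Gs := by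
    intro H hH
    rwa [hunion, Finset.mem_union] at hH
  rcases hmem G hG with hGF | hGG
  · left; intro v hv hvG; exact absurd hvG (hdis G hGF hGb v hv)
  rcases hmem G' hG' with hGF' | hGG'
  · right; intro v hv hvG; exact absurd hvG (hdis G' hGF' hGb' v hv)
  obtain ⟨y, hy, hyb, hj⟩ := leaf_joint hb hG hGb
  by_cases hex : ∃ G2 ∈ Gs, G2 ≠ G ∧ G2 ≠ G'
  · obtain ⟨G2, hG2, h1, h2⟩ := hex
    have hbG2 : b ≠ G2 := by
      rintro rfl
      exact Finset.disjoint_left.mp hdisj ((hleaves b).mp hb) hG2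
    have hby : ¬ b ⊆ y := fun h => hyb (hanti b hb.1 y hy h).symm
    obtain ⟨v, hvb, hvy⟩ := Finset.not_subset.mp hby
    refine ih G2 hG2 (fun F hF G hG => hanti F (Finset.mem_of_mem_erase hF) G
      (Finset.mem_of_mem_erase hG)) b ?_ G (Finset.mem_erase.mpr ⟨h1.symm, hG⟩) G'
      (Finset.mem_erase.mpr ⟨h2.symm, hG'⟩)
    refine grafted_leaf_of_free (hrec G2 hG2) (Finset.mem_erase.mpr ⟨hbG2, hb.1⟩) hvb ?_
    intro H hH hvH
    by_contra hne
    exact hvy (hj H (Finset.mem_of_mem_erase hH) hne v hvb hvH)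
  · push Not at hex
    rcases hmem y hy with hyF | hyG
    · left; intro v hv hvG
      exact absurd (hj G hG hGb v hv hvG) (hdis y hyF hyb v hv)
    · by_cases hyG1 : y = G
      · right; intro v hv hvG; rw [← hyG1]; exact hj G' hG' hGb' v hv hvG
      · left; intro v hv hvG; rw [← hex y hyG hyG1]; exact hj G hG hGb v hv hvG

theorem St_of_grafted {S : Finset (Finset V)} (hS : IsGrafted S) (hl : HasLeafProp S)
    (hne : ∀ F ∈ S, F.Nonempty) (hanti : ∀ F ∈ S, ∀ G ∈ S, F ⊆ G → F = G) :
    ∃ B, St S B := by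
  have hch := grafted_chain hS hanti
  obtain ⟨_, Fs, Gs, hunion, hdisj, hcover, hleaves, hFdisj, hrec⟩ := hS
  refine ⟨Fs, ⟨by rw [hunion]; exact Finset.subset_union_left, ?_, hne, ?_,
    fun b hb => hch b ((hleaves b).mpr hb), hl⟩⟩
  · intro b hb b' hb' v hv hv'
    by_contra hcon
    have : v ∈ b ∩ b' := Finset.mem_inter.mpr ⟨hv, hv'⟩
    rw [hFdisj b hb b' hb' hcon] at this
    simp at this
  · intro h hh v hv
    rw [hunion, Finset.mem_union] at hh
    rcases hh with hh | hh
    · exact ⟨h, hh, hv⟩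
    · exact hcover h hh v hv

/-- exponents of the generators of the `k`-th power -/
def powE (S : Finset (Finset V)) : ℕ → Set (V →₀ ℕ)
  | 0 => {0}
  | k + 1 => {e | ∃ e' ∈ powE S k, ∃ F ∈ S, e = e' + indE F}

theorem facet_pow (S : Finset (Finset V)) (k : ℕ) :
    facetIdealOf K S ^ k = Ideal.span ((fun e => monomial e (1 : K)) '' powE S k) := by
  induction k with
  | zero =>
    have : (monomial (0 : V →₀ ℕ) (1 : K)) = 1 := rfl
    simp [powE, this]
  | succ k ih =>
    rw [pow_succ, ih, facetIdealOf, Ideal.span_mul_span']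
    congr 1
    ext p
    constructor
    · rintro ⟨_, ⟨e, he, rfl⟩, _, ⟨F, hF, rfl⟩, rfl⟩
      refine ⟨e + indE F, ⟨e, he, F, hF, rfl⟩, ?_⟩
      simp [xMon_eq, monomial_mul]
    · rintro ⟨_, ⟨e, he, F, hF, rfl⟩, rfl⟩
      refine ⟨monomial e 1, ⟨e, he, rfl⟩, xMon K F, ⟨F, hF, rfl⟩, ?_⟩
      simp [xMon_eq, monomial_mul]

theorem powE_iff {S : Finset (Finset V)} (hne : ∀ F ∈ S, F.Nonempty) (k : ℕ) :
    ∀ A : Finset V, (∃ e ∈ powE S k, e ≤ indE A) ↔ Mt S k A := by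
  induction k with
  | zero =>
    intro A
    constructor
    · intro _
      exact ⟨∅, by simp, by simp, by simp, by simp⟩
    · intro _
      exact ⟨0, rfl, bot_le⟩
  | succ k ih =>
    intro A
    constructor
    · rintro ⟨_, ⟨e, he, F, hF, rfl⟩, hle⟩
      have hFA : F ⊆ A := by
        intro v hv
        have := hle v
        rw [Finsupp.add_apply, indE_apply, indE_apply, if_pos hv] at this
        by_contra hvA
        rw [if_neg hvA] at this
        omega
      have hle' : e ≤ indE (A \ F) := by
        intro v
        have := hle v
        rw [Finsupp.add_apply, indE_apply, indE_apply] at this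
        rw [indE_apply]
        by_cases hvF : v ∈ F
        · rw [if_pos hvF, if_pos (hFA hvF)] at this
          omega
        · by_cases hvA : v ∈ A
          · rw [if_pos (Finset.mem_sdiff.mpr ⟨hvA, hvF⟩)]
            rw [if_neg hvF, if_pos hvA] at this
            omega
          · rw [if_neg hvF, if_neg hvA] at this
            omega
      obtain ⟨M, hM, hd, hc, hMA⟩ := (ih (A \ F)).mp ⟨e, he, hle'⟩
      have hdF : ∀ G ∈ M, ∀ v ∈ G, v ∉ F := fun G hG v hv => (Finset.mem_sdiff.mp (hMA G hG hv)).2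
      have hFM : F ∉ M := by
        intro h
        obtain ⟨v, hv⟩ := hne F hF
        exact hdF F h v hv hv
      refine ⟨insert F M, Finset.insert_subset hF hM, ?_, by
        rw [Finset.card_insert_of_notMem hFM, hc], ?_⟩
      · intro X hX Y hY v hvX hvY
        rcases Finset.mem_insert.mp hX with hX | hX <;> rcases Finset.mem_insert.mp hY with hY | hY
        · rw [hX, hY]
        · rw [hX] at hvX; exact absurd hvX (hdF Y hY v hvY)
        · rw [hY] at hvY; exact absurd hvY (hdF X hX v hvX)
        · exact hd X hX Y hY v hvX hvY
      · intro X hX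
        rcases Finset.mem_insert.mp hX with hX | hX
        · rw [hX]; exact hFA
        · exact (hMA X hX).trans Finset.sdiff_subset
    · rintro ⟨M, hM, hd, hc, hMA⟩
      obtain ⟨F, hF⟩ : M.Nonempty := Finset.card_pos.mp (by omega)
      obtain ⟨e, he, hle⟩ := (ih (A \ F)).mpr ⟨M.erase F, (Finset.erase_subset _ _).trans hM,
        fun X hX Y hY => hd X (Finset.mem_of_mem_erase hX) Y (Finset.mem_of_mem_erase hY),
        by rw [Finset.card_erase_of_mem hF]; omega, by
          intro X hX v hv
          obtain ⟨hXF, hX⟩ := Finset.mem_erase.mp hX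
          exact Finset.mem_sdiff.mpr ⟨hMA X hX hv, fun h => hXF (hd X hX F hF v hv h)⟩⟩
      refine ⟨e + indE F, ⟨e, he, F, hM hF, rfl⟩, fun v => ?_⟩
      have := hle v
      rw [indE_apply] at this
      rw [Finsupp.add_apply, indE_apply, indE_apply]
      by_cases hvF : v ∈ F
      · rw [if_pos hvF, if_pos (hMA F hF hvF)]
        rw [if_neg (by simp [hvF])] at this
        omega
      · rw [if_neg hvF]
        by_cases hvA : v ∈ A
        · rw [if_pos hvA]
          rw [if_pos (Finset.mem_sdiff.mpr ⟨hvA, hvF⟩)] at this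
          omega
        · rw [if_neg (by simp [hvA])] at this
          rw [if_neg hvA]
          omega

theorem xMon_mem_pow {S : Finset (Finset V)} (hne : ∀ F ∈ S, F.Nonempty) (k : ℕ)
    (A : Finset V) : xMon K A ∈ facetIdealOf K S ^ k ↔ Mt S k A := by
  rw [← powE_iff hne, facet_pow, mem_ideal_span_monomial_image, xMon_eq]
  simp

theorem sqfreePow_eq {S : Finset (Finset V)} (hne : ∀ F ∈ S, F.Nonempty) (k : ℕ) :
    sqfreePow K (facetIdealOf K S) k = sqI K (Mt S k) := by
  rw [sqfreePow, sqI]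
  congr 1
  ext p
  constructor
  · rintro ⟨⟨A, rfl⟩, h⟩
    exact ⟨A, (xMon_mem_pow K hne k A).mp h, rfl⟩
  · rintro ⟨A, hA, rfl⟩
    exact ⟨⟨A, rfl⟩, (xMon_mem_pow K hne k A).mpr hA⟩

theorem cm_main {S : Finset (Finset V)} (hS : IsGrafted S) (hl : HasLeafProp S)
    (hne : ∀ F ∈ S, F.Nonempty) (hanti : ∀ F ∈ S, ∀ G ∈ S, F ⊆ G → F = G) (k : ℕ) (hk : 1 ≤ k) :
    IsCMQuot K (sqfreePow K (facetIdealOf K S) k) := by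
  obtain ⟨B, hB⟩ := St_of_grafted hS hl hne hanti
  rw [sqfreePow_eq K hne]
  have hup : UpC (Mt S k) := fun A A' hA ⟨M, h1, h2, h3, h4⟩ =>
    ⟨M, h1, h2, h3, fun F hF => (h4 F hF).trans hA⟩
  have h0 : ¬ Mt S k ∅ := by
    rintro ⟨M, h1, h2, h3, h4⟩
    obtain ⟨F, hF⟩ : M.Nonempty := Finset.card_pos.mp (by omega)
    obtain ⟨v, hv⟩ := hne F (h1 hF)
    simpa using h4 F hF hv
  by_cases hkr : k ≤ B.card
  · have hcard : B.card ≤ Fintype.card V := by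
      have hex : ∀ b : Finset V, ∃ v : V, b ∈ B → v ∈ b := by
        intro b
        by_cases hb : b ∈ B
        · obtain ⟨v, hv⟩ := hne b (hB.sub hb)
          exact ⟨v, fun _ => hv⟩
        · obtain ⟨b', hb'⟩ : B.Nonempty := Finset.card_pos.mp (by omega)
          obtain ⟨v, -⟩ := hne b' (hB.sub hb')
          exact ⟨v, fun h => absurd h hb⟩
      choose f hf using hex
      rw [← Finset.card_univ]
      refine Finset.card_le_card_of_injOn f (fun _ _ => Finset.mem_univ _) ?_
      intro b hb b' hb' heq
      refine hB.disj b hb b' hb' (f b) (hf b hb) ?_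
      rw [heq]
      exact hf b' hb'
    refine cm_of_VD K (d := Fintype.card V + k - B.card - 1) (VD_congr (VD_main B.card S B ∅ k _
      hB rfl (by simp) (by omega) ?_) ?_) hup h0
    · rw [Finset.card_empty]; omega
    · intro A
      simp [UU]
  · refine cm_of_VD K (d := Fintype.card V) (VD.base _ _ Finset.univ Finset.card_univ ?_) hup h0
    intro A
    simp only [Finset.subset_univ, not_true_eq_false, iff_false]
    intro h
    exact hkr (mt_card_le hB h)

end Comb


section Statements

variable {V : Type} [Fintype V] [DecidableEq V] (K : Type) [Field K]

theorem stmt0 (Δ : SimplicialComplexOn V)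
    (hcov : ∀ v : V, ∃ F ∈ Δ.facets, v ∈ F)
    (hCM : IsCMForestFacets Δ.facets) :
    ∀ k : ℕ, 1 ≤ k → IsCMQuot K (sqfreePow K (facetIdealOf K Δ.facets) k) := by
  intro k hk
  exact cm_main K hCM.2 hCM.1 Δ.nonempty_facet Δ.antichain k hk

end Statements
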